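/- arXiv:1908.02834 — 16 statements merged into one kernel-verified Lean document; each statement's English description precedes it below -/
import Mathlib

section
/- Let α: I → ℝⁿ be a C² unit-speed curve on a nonempty open interval I ⊆ ℝ and let p ∈ ℝⁿ. If there exist real constants b and c such that ‖α(s) − p‖² = s² + 2bs + c for every s ∈ I, then α is rectifying with vertex p, i.e. ⟨α(s) − p, α''(s)⟩ = 0 for all s ∈ I. -/
open scoped InnerProductSpace

/-- If there are constants `b, c` with `‖α s - p‖² = s² + 2bs + c` on `I`
for a C² unit-speed curve `α`, then `α` is rectifying with vertex `p`. -/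
theorem rectifying_of_distance_quadratic
    {n : ℕ} (hn : 2 ≤ n)
    (I : Set ℝ) (hIopen : IsOpen I) (hIne : I.Nonempty) (hIconv : Convex ℝ I)
    (α : ℝ → EuclideanSpace ℝ (Fin n)) (p : EuclideanSpace ℝ (Fin n))
    (hC2 : ContDiffOn ℝ 2 α I)
    (hunit : ∀ s ∈ I, ‖deriv α s‖ = 1)
    (b c : ℝ) (hdist : ∀ s ∈ I, ‖α s - p‖ ^ 2 = s ^ 2 + 2 * b * s + c) :
    ∀ s ∈ I, ⟪α s - p, deriv (deriv α) s⟫_ℝ = 0 := by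
  have hd : ∀ s ∈ I, HasDerivAt α (deriv α s) s := fun s hs =>
    ((hC2.differentiableOn (by norm_num)).differentiableAt (hIopen.mem_nhds hs)).hasDerivAt
  have hC1 : ContDiffOn ℝ 1 (deriv α) I :=
    hC2.deriv_of_isOpen hIopen (by norm_num)
  have hdd : ∀ s ∈ I, HasDerivAt (deriv α) (deriv (deriv α) s) s := fun s hs =>
    ((hC1.differentiableOn (by norm_num)).differentiableAt (hIopen.mem_nhds hs)).hasDerivAt
  have h1 : ∀ s ∈ I, ⟪α s - p, deriv α s⟫_ℝ = s + b := by
    intro s hs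
    have hA := ((hd s hs).sub_const p).norm_sq
    have hB : HasDerivAt (fun t : ℝ => t ^ 2 + 2 * b * t + c) (2 * s + 2 * b) s := by
      have := (((hasDerivAt_id s).pow 2).add ((hasDerivAt_id s).const_mul (2 * b))).add_const c
      exact this.congr_deriv (by simp)
    have hE : (fun t : ℝ => t ^ 2 + 2 * b * t + c) =ᶠ[nhds s] fun t => ‖α t - p‖ ^ 2 := by
      filter_upwards [hIopen.mem_nhds hs] with t ht
      exact (hdist t ht).symm
    have := hA.unique (hB.congr_of_eventuallyEq hE.symm)
    linarith
  intro s hs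
  have hA := ((hd s hs).sub_const p).inner ℝ (hdd s hs)
  have hE : (fun t : ℝ => ⟪α t - p, deriv α t⟫_ℝ) =ᶠ[nhds s] fun t => t + b := by
    filter_upwards [hIopen.mem_nhds hs] with t ht
    exact h1 t ht
  have h := hA.unique (((hasDerivAt_id s).add_const b).congr_of_eventuallyEq hE)
  rw [real_inner_self_eq_norm_sq, hunit s hs] at h
  linarith
end

section
/- Let α: I → ℝⁿ be a C¹ unit-speed curve on a nonempty open interval I ⊆ ℝ, let p ∈ ℝⁿ, and let a > 0 be such that ‖α(s) − p‖² = s² + a² for every s ∈ I. Define β(s) = p + (α(s) − p)/‖α(s) − p‖. Then β(s) lies on the unit sphere centered at p for every s, α(s) = p + √(s² + a²)·(β(s) − p), and β is differentiable with ‖β'(s)‖ = a/(s² + a²) for every s ∈ I. -/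
open scoped InnerProductSpace

/-- If a C¹ unit-speed curve `α` satisfies `‖α s - p‖² = s² + a²` (`a > 0`)
on `I`, then the radial projection `β s = p + (α s - p)/‖α s - p‖` is a unit-sphere curve,
`α s = p + √(s² + a²) • (β s - p)`, and `β` is differentiable with `‖β' s‖ = a/(s² + a²)`. -/
theorem rectifying_spherical_projection
    {n : ℕ} (hn : 2 ≤ n)
    (I : Set ℝ) (hIopen : IsOpen I) (hIne : I.Nonempty) (hIconv : Convex ℝ I)
    (α β : ℝ → EuclideanSpace ℝ (Fin n)) (p : EuclideanSpace ℝ (Fin n))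
    (hC1 : ContDiffOn ℝ 1 α I)
    (hunit : ∀ s ∈ I, ‖deriv α s‖ = 1)
    (a : ℝ) (ha : 0 < a)
    (hdist : ∀ s ∈ I, ‖α s - p‖ ^ 2 = s ^ 2 + a ^ 2)
    (hβ : ∀ s, β s = p + ‖α s - p‖⁻¹ • (α s - p)) :
    ∀ s ∈ I, ‖β s - p‖ = 1 ∧
      α s = p + Real.sqrt (s ^ 2 + a ^ 2) • (β s - p) ∧
      DifferentiableAt ℝ β s ∧
      ‖deriv β s‖ = a / (s ^ 2 + a ^ 2) := by
  intro s hs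
  have hr2 : 0 < s ^ 2 + a ^ 2 := by positivity
  have hnorm : ∀ t ∈ I, ‖α t - p‖ = Real.sqrt (t ^ 2 + a ^ 2) := by
    intro t ht
    rw [← hdist t ht, Real.sqrt_sq (norm_nonneg _)]
  obtain ⟨r, hr⟩ : ∃ r, r = Real.sqrt (s ^ 2 + a ^ 2) := ⟨_, rfl⟩
  have hrpos : 0 < r := by rw [hr]; exact Real.sqrt_pos.mpr hr2
  have hrsq : r ^ 2 = s ^ 2 + a ^ 2 := by rw [hr]; exact Real.sq_sqrt hr2.le
  have hns : ‖α s - p‖ = r := by rw [hnorm s hs, hr]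
  have hnhds : I ∈ nhds s := hIopen.mem_nhds hs
  have hα : HasDerivAt α (deriv α s) s :=
    ((hC1.differentiableOn one_ne_zero).differentiableAt hnhds).hasDerivAt
  have hαp : HasDerivAt (fun t => α t - p) (deriv α s) s := hα.sub_const p
  have hq : HasDerivAt (fun t : ℝ => t ^ 2 + a ^ 2) (2 * s) s := by
    simpa using (hasDerivAt_pow 2 s).add_const (a ^ 2)
  have hin : ⟪α s - p, deriv α s⟫_ℝ = s := by
    have h1 := hαp.norm_sq
    have h2 : HasDerivAt (fun t => ‖α t - p‖ ^ 2) (2 * s) s :=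
      hq.congr_of_eventuallyEq (Filter.eventually_of_mem hnhds hdist)
    have h3 := h1.unique h2
    linarith
  have hinv : HasDerivAt (fun t : ℝ => (Real.sqrt (t ^ 2 + a ^ 2))⁻¹) (-(s / r) / r ^ 2) s := by
    have h := (hq.sqrt hr2.ne').inv (by rw [← hr]; exact hrpos.ne')
    rw [← hr] at h
    refine h.congr_deriv ?_
    rw [mul_div_mul_left s r two_ne_zero]
  have hβd : HasDerivAt β (r⁻¹ • deriv α s + (-(s / r) / r ^ 2) • (α s - p)) s := by
    have h := (hinv.smul hαp).const_add p
    rw [← hr] at h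
    refine h.congr_of_eventuallyEq (Filter.eventually_of_mem hnhds fun t ht => ?_)
    rw [hβ t, hnorm t ht]
    rfl
  have hβs : β s - p = r⁻¹ • (α s - p) := by rw [hβ s, hns]; simp
  refine ⟨?_, ?_, hβd.differentiableAt, ?_⟩
  · rw [hβs, norm_smul, hns, Real.norm_of_nonneg (inv_nonneg.mpr hrpos.le)]
    exact inv_mul_cancel₀ hrpos.ne'
  · rw [hβs, ← hr, smul_smul, mul_inv_cancel₀ hrpos.ne']
    simp
  · rw [hβd.deriv, ← hrsq]
    have hpos : 0 ≤ a / r ^ 2 := by positivity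
    rw [← sq_eq_sq₀ (norm_nonneg _) hpos, norm_add_sq_real, norm_smul, norm_smul,
      real_inner_smul_left, real_inner_smul_right, real_inner_comm, hin, hunit s hs, hns,
      mul_pow, mul_pow, Real.norm_eq_abs, Real.norm_eq_abs, sq_abs, sq_abs]
    have ha2 : a ^ 2 = r ^ 2 - s ^ 2 := by linarith
    rw [div_pow a, ha2]
    field_simp
    ring
end

section
/- Let J ⊆ (−π/2, π/2) be a nonempty open interval, p ∈ ℝⁿ, a > 0, and let β: J → ℝⁿ be a C² curve with ‖β(t) − p‖ = 1 and ‖β'(t)‖ = 1 for all t ∈ J. Define α(t) = p + (a/cos t)·(β(t) − p). Then ‖α'(t)‖ = a/cos²t > 0 for all t ∈ J, and α is a rectifying curve with vertex p: writing T(t) = α'(t)/‖α'(t)‖ for the unit tangent, one has ⟨α(t) − p, T'(t)⟩ = 0 for all t ∈ J. -/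
open scoped InnerProductSpace

/-- If `β : J → 𝕊^{n-1}(p,1)` is a C² unit-speed spherical curve on an open
interval `J ⊆ (−π/2, π/2)` and `α t = p + (a sec t) • (β t - p)` with `a > 0`, then
`‖α' t‖ = a/cos² t > 0` and `α` is rectifying with vertex `p`: its position vector is
orthogonal to the derivative of its unit tangent `T = α'/‖α'‖`. -/
theorem secant_cone_curve_is_rectifying
    {n : ℕ} (hn : 2 ≤ n)
    (J : Set ℝ) (hJopen : IsOpen J) (hJne : J.Nonempty) (hJconv : Convex ℝ J)
    (hJsub : J ⊆ Set.Ioo (-(Real.pi / 2)) (Real.pi / 2))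
    (p : EuclideanSpace ℝ (Fin n)) (a : ℝ) (ha : 0 < a)
    (β : ℝ → EuclideanSpace ℝ (Fin n))
    (hβC2 : ContDiffOn ℝ 2 β J)
    (hβsph : ∀ t ∈ J, ‖β t - p‖ = 1)
    (hβunit : ∀ t ∈ J, ‖deriv β t‖ = 1)
    (α : ℝ → EuclideanSpace ℝ (Fin n))
    (hα : ∀ t, α t = p + (a / Real.cos t) • (β t - p)) :
    ∀ t ∈ J, ‖deriv α t‖ = a / Real.cos t ^ 2 ∧ 0 < a / Real.cos t ^ 2 ∧
      ⟪α t - p, deriv (fun u => ‖deriv α u‖⁻¹ • deriv α u) t⟫_ℝ = 0 := by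
  have hcos : ∀ t ∈ J, 0 < Real.cos t := fun t ht =>
    Real.cos_pos_of_mem_Ioo (hJsub ht)
  have hb : ∀ t ∈ J, HasDerivAt β (deriv β t) t := fun t ht =>
    ((hβC2.differentiableOn (by norm_num)).differentiableAt (hJopen.mem_nhds ht)).hasDerivAt
  have hb' : ∀ t ∈ J, HasDerivAt (fun u => β u - p) (deriv β t) t := fun t ht =>
    (hb t ht).sub_const p
  have hb2 : ∀ t ∈ J, DifferentiableAt ℝ (deriv β) t := fun t ht =>
    (((contDiffOn_succ_iff_deriv_of_isOpen (n := 1) hJopen).1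
      (by simpa [one_add_one_eq_two] using hβC2)).2.2.differentiableOn
        (by norm_num)).differentiableAt (hJopen.mem_nhds ht)
  have hgg : ∀ t ∈ J, ⟪β t - p, β t - p⟫_ℝ = 1 := fun t ht => by
    rw [real_inner_self_eq_norm_sq, hβsph t ht]; norm_num
  have hdd : ∀ t ∈ J, ⟪deriv β t, deriv β t⟫_ℝ = 1 := fun t ht => by
    rw [real_inner_self_eq_norm_sq, hβunit t ht]; norm_num
  have hgd : ∀ t ∈ J, ⟪β t - p, deriv β t⟫_ℝ = 0 := fun t ht => by
    have h1 := (hb' t ht).inner ℝ (hb' t ht)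
    have h2 : HasDerivAt (fun u => ⟪β u - p, β u - p⟫_ℝ) 0 t :=
      (hasDerivAt_const t (1 : ℝ)).congr_of_eventuallyEq
        (Filter.eventuallyEq_of_mem (hJopen.mem_nhds ht) hgg)
    have h3 := h1.unique h2
    rw [real_inner_comm (β t - p) (deriv β t)] at h3
    linarith
  have hdα : ∀ t ∈ J, deriv α t = (a / Real.cos t ^ 2) •
      (Real.sin t • (β t - p) + Real.cos t • deriv β t) := fun t ht => by
    have hc := (hcos t ht).ne'
    have h1 : HasDerivAt (fun u => a / Real.cos u) (a * Real.sin t / Real.cos t ^ 2) t := by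
      have h := (hasDerivAt_const t a).div (Real.hasDerivAt_cos t) hc
      have e : (0 * Real.cos t - a * -Real.sin t) / Real.cos t ^ 2
          = a * Real.sin t / Real.cos t ^ 2 := by ring
      rw [e] at h
      exact h
    have h2 := (h1.smul (hb' t ht)).const_add p
    have h3 : α = fun u => p + (a / Real.cos u) • (β u - p) := funext hα
    rw [h3]
    refine h2.deriv.trans ?_
    have e1 : a / Real.cos t ^ 2 * Real.sin t = a * Real.sin t / Real.cos t ^ 2 := by ring
    have e2 : a / Real.cos t ^ 2 * Real.cos t = a / Real.cos t := by field_simp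
    rw [smul_add, smul_smul, smul_smul, e1, e2, add_comm]
  have hTn : ∀ t ∈ J, ‖Real.sin t • (β t - p) + Real.cos t • deriv β t‖ = 1 := fun t ht => by
    have : ‖Real.sin t • (β t - p) + Real.cos t • deriv β t‖ ^ 2 = 1 := by
      rw [← real_inner_self_eq_norm_sq]
      simp only [inner_add_left, inner_add_right, real_inner_smul_left, real_inner_smul_right]
      rw [real_inner_comm (β t - p) (deriv β t), hgg t ht, hdd t ht, hgd t ht]
      nlinarith [Real.sin_sq_add_cos_sq t]
    have h0 := norm_nonneg (Real.sin t • (β t - p) + Real.cos t • deriv β t)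
    nlinarith
  have hpos : ∀ t ∈ J, 0 < a / Real.cos t ^ 2 := fun t ht =>
    div_pos ha (pow_pos (hcos t ht) 2)
  have hn : ∀ t ∈ J, ‖deriv α t‖ = a / Real.cos t ^ 2 := fun t ht => by
    rw [hdα t ht, norm_smul, hTn t ht, mul_one, Real.norm_of_nonneg (hpos t ht).le]
  intro t ht
  refine ⟨hn t ht, hpos t ht, ?_⟩
  have hT : (fun u => ‖deriv α u‖⁻¹ • deriv α u) =ᶠ[nhds t]
      fun u => Real.sin u • (β u - p) + Real.cos u • deriv β u :=
    Filter.eventuallyEq_of_mem (hJopen.mem_nhds ht) fun u hu => by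
      rw [hn u hu, hdα u hu, smul_smul, inv_mul_cancel₀ (hpos u hu).ne', one_smul]
  rw [hT.deriv_eq]
  have hTd : HasDerivAt (fun u => Real.sin u • (β u - p) + Real.cos u • deriv β u)
      (deriv (fun u => Real.sin u • (β u - p) + Real.cos u • deriv β u) t) t :=
    (((Real.hasDerivAt_sin t).smul (hb' t ht)).add
      ((Real.hasDerivAt_cos t).smul (hb2 t ht).hasDerivAt)).differentiableAt.hasDerivAt
  have h1 := (hb' t ht).inner ℝ hTd
  have h2 : HasDerivAt
      (fun u => ⟪β u - p, Real.sin u • (β u - p) + Real.cos u • deriv β u⟫_ℝ) (Real.cos t) t :=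
    (Real.hasDerivAt_sin t).congr_of_eventuallyEq
      (Filter.eventuallyEq_of_mem (hJopen.mem_nhds ht) fun u hu => by
        simp only [inner_add_right, real_inner_smul_right]
        rw [hgg u hu, hgd u hu]; ring)
  have h3 := h1.unique h2
  have h4 : ⟪deriv β t, Real.sin t • (β t - p) + Real.cos t • deriv β t⟫_ℝ = Real.cos t := by
    simp only [inner_add_right, real_inner_smul_right]
    rw [real_inner_comm (β t - p) (deriv β t), hgd t ht, hdd t ht]; ring
  rw [hα t, add_sub_cancel_left, real_inner_smul_left]
  rw [h4] at h3
  rw [show ⟪β t - p, deriv (fun u => Real.sin u • (β u - p) + Real.cos u • deriv β u) t⟫_ℝ = 0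
    by linarith, mul_zero]
end

section
/- Let α: I → ℝⁿ be a C² unit-speed curve on a nonempty open interval I ⊆ ℝ that is rectifying with vertex p ∈ ℝⁿ. Then the squared length of the normal component of α − p, namely the function s ↦ ‖α(s) − p‖² − ⟨α(s) − p, α'(s)⟩², is constant on I. -/
open scoped InnerProductSpace

/-- For a C² unit-speed rectifying curve `α` with vertex `p`, the squared
length of the normal component of `α - p`, i.e. `‖α - p‖² - ⟪α - p, α'⟫²`, is constant. -/
theorem rectifying_normal_component_const
    {n : ℕ} (hn : 2 ≤ n)
    (I : Set ℝ) (hIopen : IsOpen I) (hIne : I.Nonempty) (hIconv : Convex ℝ I)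
    (α : ℝ → EuclideanSpace ℝ (Fin n)) (p : EuclideanSpace ℝ (Fin n))
    (hC2 : ContDiffOn ℝ 2 α I)
    (hunit : ∀ s ∈ I, ‖deriv α s‖ = 1)
    (hrect : ∀ s ∈ I, ⟪α s - p, deriv (deriv α) s⟫_ℝ = 0) :
    ∃ C : ℝ, ∀ s ∈ I, ‖α s - p‖ ^ 2 - (⟪α s - p, deriv α s⟫_ℝ) ^ 2 = C := by
  have key : ∀ s ∈ I, HasDerivAt
      (fun s => ‖α s - p‖ ^ 2 - (⟪α s - p, deriv α s⟫_ℝ) ^ 2) 0 s := by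
    intro s hs
    have hd1 : HasDerivAt α (deriv α s) s :=
      ((hC2.differentiableOn (by norm_num)).differentiableAt (hIopen.mem_nhds hs)).hasDerivAt
    have hC1 : ContDiffOn ℝ 1 (deriv α) I := hC2.deriv_of_isOpen hIopen (by norm_num)
    have hd2 : HasDerivAt (deriv α) (deriv (deriv α) s) s :=
      ((hC1.differentiableOn (by norm_num)).differentiableAt (hIopen.mem_nhds hs)).hasDerivAt
    have hsub := hd1.sub_const p
    have h1 := hsub.norm_sq
    have h2 := (hsub.inner ℝ hd2).pow 2
    refine (h1.sub h2).congr_deriv ?_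
    rw [hrect s hs, real_inner_self_eq_norm_sq, hunit s hs]
    norm_num
  obtain ⟨s₀, hs₀⟩ := hIne
  refine ⟨‖α s₀ - p‖ ^ 2 - (⟪α s₀ - p, deriv α s₀⟫_ℝ) ^ 2, fun s hs => ?_⟩
  exact hIopen.is_const_of_deriv_eq_zero hIconv.isPreconnected
    (fun x hx => (key x hx).differentiableAt.differentiableWithinAt)
    (fun x hx => (key x hx).deriv) hs hs₀
end

section
/- Let α: I → ℝⁿ be a C² unit-speed curve on a nonempty open interval I ⊆ ℝ and p ∈ ℝⁿ. Assume that the function s ↦ ‖α(s) − p‖² − ⟨α(s) − p, α'(s)⟩² is constant on I and that the distance function s ↦ ‖α(s) − p‖ is not constant on any nonempty open subinterval of I. Then α is rectifying with vertex p, i.e. ⟨α(s) − p, α''(s)⟩ = 0 for all s ∈ I. -/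
open scoped InnerProductSpace

/-- If the squared length of the normal component of `α - p` is constant
on `I` and the distance function `s ↦ ‖α s - p‖` is not constant on any nonempty open
subinterval of `I`, then the C² unit-speed curve `α` is rectifying with vertex `p`. -/
theorem rectifying_of_normal_component_const
    {n : ℕ} (hn : 2 ≤ n)
    (I : Set ℝ) (hIopen : IsOpen I) (hIne : I.Nonempty) (hIconv : Convex ℝ I)
    (α : ℝ → EuclideanSpace ℝ (Fin n)) (p : EuclideanSpace ℝ (Fin n))
    (hC2 : ContDiffOn ℝ 2 α I)
    (hunit : ∀ s ∈ I, ‖deriv α s‖ = 1)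
    (hconst : ∃ C : ℝ, ∀ s ∈ I, ‖α s - p‖ ^ 2 - (⟪α s - p, deriv α s⟫_ℝ) ^ 2 = C)
    (hnonconst : ∀ a b : ℝ, a < b → Set.Ioo a b ⊆ I →
      ¬ ∃ R : ℝ, ∀ s ∈ Set.Ioo a b, ‖α s - p‖ = R) :
    ∀ s ∈ I, ⟪α s - p, deriv (deriv α) s⟫_ℝ = 0 := by
  obtain ⟨C, hC⟩ := hconst
  have hd1 : ContDiffOn ℝ 1 (deriv α) I := hC2.deriv_of_isOpen hIopen (by norm_num)
  have hd2 : ContinuousOn (deriv (deriv α)) I :=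
    hd1.continuousOn_deriv_of_isOpen hIopen le_rfl
  have hα : ∀ s ∈ I, HasDerivAt α (deriv α s) s := fun s hs =>
    ((hC2.differentiableOn (by norm_num)).differentiableAt (hIopen.mem_nhds hs)).hasDerivAt
  have hα' : ∀ s ∈ I, HasDerivAt (deriv α) (deriv (deriv α) s) s := fun s hs =>
    ((hd1.differentiableOn (by norm_num)).differentiableAt (hIopen.mem_nhds hs)).hasDerivAt
  have key : ∀ s ∈ I, ⟪α s - p, deriv α s⟫_ℝ * ⟪α s - p, deriv (deriv α) s⟫_ℝ = 0 := by
    intro s hs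
    have h1 : HasDerivAt (fun t => α t - p) (deriv α s) s := (hα s hs).sub_const p
    have hg := h1.norm_sq
    have hf := (h1.inner ℝ (hα' s hs)).pow 2
    have hF := hg.sub hf
    have h0 : HasDerivAt (fun _ : ℝ => C) 0 s := hasDerivAt_const s C
    have h2 := h0.congr_of_eventuallyEq
      (Filter.eventuallyEq_of_mem (hIopen.mem_nhds hs) (fun t ht => hC t ht))
    have h3 := hF.unique h2
    have h4 : ⟪deriv α s, deriv α s⟫_ℝ = 1 := by
      rw [real_inner_self_eq_norm_sq, hunit s hs]; norm_num
    rw [h4] at h3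
    norm_num at h3
    linarith
  intro s hs
  by_contra hne
  have hcont : ContinuousAt (fun t => ⟪α t - p, deriv (deriv α) t⟫_ℝ) s :=
    ((hα s hs).continuousAt.sub continuousAt_const).inner
      (hd2.continuousAt (hIopen.mem_nhds hs))
  have hev := (hcont.eventually_ne hne).and (hIopen.mem_nhds hs)
  obtain ⟨ε, hε, hball⟩ := Metric.eventually_nhds_iff_ball.1 hev
  rw [Real.ball_eq_Ioo] at hball
  refine hnonconst (s - ε) (s + ε) (by linarith) (fun t ht => (hball t ht).2)
    ⟨Real.sqrt C, fun t ht => ?_⟩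
  obtain ⟨h5, h6⟩ := hball t ht
  have h7 := (mul_eq_zero.1 (key t h6)).resolve_right h5
  have h8 := hC t h6
  rw [h7] at h8
  rw [← h8]
  norm_num
end

section
/- Let I ⊆ ℝ be a nonempty open interval and u: I → ℝ a C² function with u(t) > 0 for all t ∈ I, satisfying the differential equation u(t)·u''(t) − 2·u'(t)² − u(t)² = 0 for all t ∈ I. Then there exist constants a > 0 and b ∈ ℝ such that for every t ∈ I one has cos(t + b) > 0 and u(t)·cos(t + b) = a (that is, u(t) = a·sec(t + b)). -/
/-- Every positive C² solution of the cone-geodesic ODE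
`u·u'' − 2·u'² − u² = 0` on an open interval is a secant function:
`u t = a · sec (t + b)` with `a > 0`. -/
theorem cone_geodesic_ode_solution_is_secant
    (I : Set ℝ) (hIopen : IsOpen I) (hIne : I.Nonempty) (hIconv : Convex ℝ I)
    (u : ℝ → ℝ) (hC2 : ContDiffOn ℝ 2 u I)
    (hpos : ∀ t ∈ I, 0 < u t)
    (hode : ∀ t ∈ I, u t * deriv (deriv u) t - 2 * (deriv u t) ^ 2 - (u t) ^ 2 = 0) :
    ∃ a b : ℝ, 0 < a ∧ ∀ t ∈ I, 0 < Real.cos (t + b) ∧ u t * Real.cos (t + b) = a := by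
  have hpre : IsPreconnected I := hIconv.isPreconnected
  have hu1 : ∀ t ∈ I, HasDerivAt u (deriv u t) t := fun t ht =>
    ((hC2.differentiableOn (by norm_num)).differentiableAt (hIopen.mem_nhds ht)).hasDerivAt
  have hC1 : ContDiffOn ℝ 1 (deriv u) I := hC2.deriv_of_isOpen hIopen (by norm_num)
  have hu2 : ∀ t ∈ I, HasDerivAt (deriv u) (deriv (deriv u) t) t := fun t ht =>
    ((hC1.differentiableOn (by norm_num)).differentiableAt (hIopen.mem_nhds ht)).hasDerivAt
  -- the angle `arctan (u'/u)` grows at unit speed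
  have hθ : ∀ t ∈ I, HasDerivAt (fun s => Real.arctan (deriv u s / u s) - s) 0 t := by
    intro t ht
    have hp := hpos t ht
    have hd := (((hu2 t ht).div (hu1 t ht) hp.ne').arctan).sub (hasDerivAt_id t)
    refine hd.congr_deriv ?_
    have ho := hode t ht
    have h1 : deriv (deriv u) t * u t - deriv u t * deriv u t = u t ^ 2 + deriv u t ^ 2 := by
      linarith
    have h2 : u t ^ 2 + deriv u t ^ 2 ≠ 0 := by positivity
    simp only [Pi.div_apply]
    rw [h1]
    field_simp
    ring
  obtain ⟨b, hb⟩ := hIopen.exists_is_const_of_deriv_eq_zero hpre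
    (fun t ht => (hθ t ht).differentiableAt.differentiableWithinAt)
    (fun t ht => (hθ t ht).deriv)
  have hb' : ∀ t ∈ I, t + b = Real.arctan (deriv u t / u t) := fun t ht => by
    have := hb t ht
    linarith
  have hcos : ∀ t ∈ I, 0 < Real.cos (t + b) := fun t ht => by
    rw [hb' t ht]
    exact Real.cos_arctan_pos _
  have hconst : ∀ t ∈ I, HasDerivAt (fun s => u s * Real.cos (s + b)) 0 t := by
    intro t ht
    have hp := hpos t ht
    have hd := (hu1 t ht).mul ((hasDerivAt_id t).add_const b).cos
    refine hd.congr_deriv ?_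
    have htan : Real.tan (t + b) = deriv u t / u t := by rw [hb' t ht, Real.tan_arctan]
    have hc := hcos t ht
    rw [Real.tan_eq_sin_div_cos, div_eq_div_iff hc.ne' hp.ne'] at htan
    simp only [id]
    linarith
  obtain ⟨a, ha⟩ := hIopen.exists_is_const_of_deriv_eq_zero hpre
    (fun t ht => (hconst t ht).differentiableAt.differentiableWithinAt)
    (fun t ht => (hconst t ht).deriv)
  obtain ⟨t₀, ht₀⟩ := hIne
  refine ⟨a, b, ?_, fun t ht => ⟨hcos t ht, ha t ht⟩⟩
  rw [← ha t₀ ht₀]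
  exact mul_pos (hpos t₀ ht₀) (hcos t₀ ht₀)
end

section
/- Let β: I → ℝ³ be a C² unit-speed curve on a nonempty open interval I ⊆ ℝ with ‖β(s)‖ = 1 for all s ∈ I, and let d ∈ ℝ³ be a nonzero vector. If the function s ↦ ⟨β(s) × β'(s), d⟩ is constant on I, then there exists a nonzero vector e ∈ ℝ³ such that s ↦ ⟨β(s), e⟩ is constant on I (i.e. β is an arc of a circle on the unit sphere, so the cone over β is circular or planar). -/
open scoped InnerProductSpace

/-- The cross product on `ℝ³` regarded as `EuclideanSpace ℝ (Fin 3)`. -/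
noncomputable def cross3 (x y : EuclideanSpace ℝ (Fin 3)) : EuclideanSpace ℝ (Fin 3) :=
  (WithLp.equiv 2 (Fin 3 → ℝ)).symm
    ![x 1 * y 2 - x 2 * y 1, x 2 * y 0 - x 0 * y 2, x 0 * y 1 - x 1 * y 0]


namespace ConeAux

theorem frame (b t x : Fin 3 → ℝ)
    (hbb : b 0 * b 0 + b 1 * b 1 + b 2 * b 2 = 1)
    (htt : t 0 * t 0 + t 1 * t 1 + t 2 * t 2 = 1)
    (hbt : b 0 * t 0 + b 1 * t 1 + b 2 * t 2 = 0)
    (hx0 : x 0 = b 1 * t 2 - b 2 * t 1) (hx1 : x 1 = b 2 * t 0 - b 0 * t 2)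
    (hx2 : x 2 = b 0 * t 1 - b 1 * t 0) (i j : Fin 3) :
    b i * b j + t i * t j + x i * x j = if i = j then 1 else 0 := by
  have hxx : x 0 * x 0 + x 1 * x 1 + x 2 * x 2 = 1 := by
    rw [hx0, hx1, hx2]
    linear_combination (t 0 * t 0 + t 1 * t 1 + t 2 * t 2) * hbb + htt
      - (b 0 * t 0 + b 1 * t 1 + b 2 * t 2) * hbt
  have hbx : b 0 * x 0 + b 1 * x 1 + b 2 * x 2 = 0 := by
    rw [hx0, hx1, hx2]; ring
  have htx : t 0 * x 0 + t 1 * x 1 + t 2 * x 2 = 0 := by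
    rw [hx0, hx1, hx2]; ring
  let M : Matrix (Fin 3) (Fin 3) ℝ := Matrix.of ![b, t, x]
  have hM : M * M.transpose = 1 := by
    ext i j
    fin_cases i <;> fin_cases j <;>
      simp [M, Matrix.mul_apply, Fin.sum_univ_three] <;> linarith
  have hM' : M.transpose * M = 1 := mul_eq_one_comm.mp hM
  have := congrFun (congrFun hM' i) j
  simpa [M, Matrix.mul_apply, Fin.sum_univ_three, Matrix.one_apply] using this

theorem expand (b t x : Fin 3 → ℝ)
    (hbb : b 0 * b 0 + b 1 * b 1 + b 2 * b 2 = 1)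
    (htt : t 0 * t 0 + t 1 * t 1 + t 2 * t 2 = 1)
    (hbt : b 0 * t 0 + b 1 * t 1 + b 2 * t 2 = 0)
    (hx0 : x 0 = b 1 * t 2 - b 2 * t 1) (hx1 : x 1 = b 2 * t 0 - b 0 * t 2)
    (hx2 : x 2 = b 0 * t 1 - b 1 * t 0) (v : Fin 3 → ℝ) (i : Fin 3) :
    v i = (v 0 * b 0 + v 1 * b 1 + v 2 * b 2) * b i + (v 0 * t 0 + v 1 * t 1 + v 2 * t 2) * t i
      + (v 0 * x 0 + v 1 * x 1 + v 2 * x 2) * x i := by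
  have h := frame b t x hbb htt hbt hx0 hx1 hx2
  have h0 := h 0 i
  have h1 := h 1 i
  have h2 := h 2 i
  have e : v i = v 0 * (if 0 = i then 1 else 0) + v 1 * (if 1 = i then 1 else 0)
      + v 2 * (if 2 = i then 1 else 0) := by
    fin_cases i <;> simp
  rw [e, ← h0, ← h1, ← h2]; ring

/-- constancy on an open convex set -/
theorem const_of (I : Set ℝ) (hIopen : IsOpen I) (hIconv : Convex ℝ I) (f : ℝ → ℝ)
    (hf : ∀ s ∈ I, HasDerivAt f 0 s) : ∀ s ∈ I, ∀ u ∈ I, f s = f u := by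
  intro s hs u hu
  exact hIopen.is_const_of_deriv_eq_zero hIconv.isPreconnected
    (fun y hy => (hf y hy).differentiableAt.differentiableWithinAt)
    (fun y hy => (hf y hy).deriv) hs hu

theorem main (I : Set ℝ) (hIopen : IsOpen I) (hIne : I.Nonempty) (hIconv : Convex ℝ I)
    (b t p : Fin 3 → ℝ → ℝ) (d : Fin 3 → ℝ) (hd : d ≠ 0)
    (hb : ∀ i, ∀ s ∈ I, HasDerivAt (b i) (t i s) s)
    (ht : ∀ i, ∀ s ∈ I, HasDerivAt (t i) (p i s) s)
    (hp : ∀ i, ContinuousOn (p i) I)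
    (hbb : ∀ s ∈ I, b 0 s * b 0 s + b 1 s * b 1 s + b 2 s * b 2 s = 1)
    (htt : ∀ s ∈ I, t 0 s * t 0 s + t 1 s * t 1 s + t 2 s * t 2 s = 1)
    (C : ℝ)
    (hC : ∀ s ∈ I, d 0 * (b 1 s * t 2 s - b 2 s * t 1 s) + d 1 * (b 2 s * t 0 s - b 0 s * t 2 s)
      + d 2 * (b 0 s * t 1 s - b 1 s * t 0 s) = C) :
    ∃ e : Fin 3 → ℝ, e ≠ 0 ∧ ∃ c : ℝ, ∀ s ∈ I, e 0 * b 0 s + e 1 * b 1 s + e 2 * b 2 s = c := by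
  have uniq : ∀ (f : ℝ → ℝ) (c f' s : ℝ), s ∈ I → (∀ s ∈ I, f s = c) → HasDerivAt f f' s →
      f' = 0 := by
    intro f c f' s hs h hf
    have : f =ᶠ[nhds s] fun _ => c := by
      filter_upwards [hIopen.mem_nhds hs] with y hy using h y hy
    exact hf.unique ((hasDerivAt_const s c).congr_of_eventuallyEq this)
  have hbt : ∀ s ∈ I, b 0 s * t 0 s + b 1 s * t 1 s + b 2 s * t 2 s = 0 := by
    intro s hs
    have := uniq _ 1 _ s hs hbb
      ((((hb 0 s hs).mul (hb 0 s hs)).add ((hb 1 s hs).mul (hb 1 s hs))).add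
        ((hb 2 s hs).mul (hb 2 s hs)))
    linarith
  have htp : ∀ s ∈ I, t 0 s * p 0 s + t 1 s * p 1 s + t 2 s * p 2 s = 0 := by
    intro s hs
    have := uniq _ 1 _ s hs htt
      ((((ht 0 s hs).mul (ht 0 s hs)).add ((ht 1 s hs).mul (ht 1 s hs))).add
        ((ht 2 s hs).mul (ht 2 s hs)))
    linarith
  have hbp : ∀ s ∈ I, b 0 s * p 0 s + b 1 s * p 1 s + b 2 s * p 2 s = -1 := by
    intro s hs
    have := uniq _ 0 _ s hs hbt
      ((((hb 0 s hs).mul (ht 0 s hs)).add ((hb 1 s hs).mul (ht 1 s hs))).add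
        ((hb 2 s hs).mul (ht 2 s hs)))
    have := htt s hs
    linarith
  let x : Fin 3 → ℝ → ℝ := ![fun s => b 1 s * t 2 s - b 2 s * t 1 s,
    fun s => b 2 s * t 0 s - b 0 s * t 2 s, fun s => b 0 s * t 1 s - b 1 s * t 0 s]
  have x0 : ∀ s, x 0 s = b 1 s * t 2 s - b 2 s * t 1 s := fun s => rfl
  have x1 : ∀ s, x 1 s = b 2 s * t 0 s - b 0 s * t 2 s := fun s => rfl
  have x2 : ∀ s, x 2 s = b 0 s * t 1 s - b 1 s * t 0 s := fun s => rfl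
  let κ : ℝ → ℝ := fun s => p 0 s * x 0 s + p 1 s * x 1 s + p 2 s * x 2 s
  have hκ : ∀ s, κ s = p 0 s * x 0 s + p 1 s * x 1 s + p 2 s * x 2 s := fun s => rfl
  have ex : ∀ s ∈ I, ∀ (v : Fin 3 → ℝ) (i : Fin 3),
      v i = (v 0 * b 0 s + v 1 * b 1 s + v 2 * b 2 s) * b i s
        + (v 0 * t 0 s + v 1 * t 1 s + v 2 * t 2 s) * t i s
        + (v 0 * x 0 s + v 1 * x 1 s + v 2 * x 2 s) * x i s := fun s hs v i =>
    expand (fun i => b i s) (fun i => t i s) (fun i => x i s) (hbb s hs) (htt s hs) (hbt s hs)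
      (x0 s) (x1 s) (x2 s) v i
  have pe : ∀ s ∈ I, ∀ i, p i s = - b i s + κ s * x i s := by
    intro s hs i
    have h := ex s hs (fun i => p i s) i
    rw [hκ]
    linear_combination h + b i s * hbp s hs + t i s * htp s hs
  have hx : ∀ i, ∀ s ∈ I, HasDerivAt (x i) (- κ s * t i s) s := by
    intro i s hs
    have p0 := pe s hs 0
    have p1 := pe s hs 1
    have p2 := pe s hs 2
    rw [x0] at p0
    rw [x1] at p1
    rw [x2] at p2
    have hB := hbb s hs
    have hBT := hbt s hs
    fin_cases i
    · refine (((hb 1 s hs).mul (ht 2 s hs)).sub ((hb 2 s hs).mul (ht 1 s hs))).congr_deriv ?_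
      simp only [Fin.zero_eta]
      linear_combination b 1 s * p2 - b 2 s * p1 - κ s * t 0 s * hB + κ s * b 0 s * hBT
    · refine (((hb 2 s hs).mul (ht 0 s hs)).sub ((hb 0 s hs).mul (ht 2 s hs))).congr_deriv ?_
      simp only [Fin.mk_one]
      linear_combination b 2 s * p0 - b 0 s * p2 - κ s * t 1 s * hB + κ s * b 1 s * hBT
    · refine (((hb 0 s hs).mul (ht 1 s hs)).sub ((hb 1 s hs).mul (ht 0 s hs))).congr_deriv ?_
      simp only [Fin.reduceFinMk]
      linear_combination b 0 s * p1 - b 1 s * p0 - κ s * t 2 s * hB + κ s * b 2 s * hBT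
  have hκc : ContinuousOn κ I := by
    have hxc : ∀ i, ContinuousOn (x i) I := fun i s hs =>
      (hx i s hs).continuousAt.continuousWithinAt
    exact (((hp 0).mul (hxc 0)).add ((hp 1).mul (hxc 1))).add ((hp 2).mul (hxc 2))
  by_cases hall : ∀ s ∈ I, κ s = 0
  · -- great circle
    obtain ⟨s0, hs0⟩ := hIne
    have hxconst : ∀ i, ∀ s ∈ I, x i s = x i s0 := fun i s hs =>
      const_of I hIopen hIconv (x i)
        (fun y hy => by simpa [hall y hy] using hx i y hy) s hs s0 hs0
    refine ⟨fun i => x i s0, ?_, 0, ?_⟩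
    · intro h0
      have h : ∀ i, x i s0 = 0 := fun i => congrFun h0 i
      have hf := frame (fun i => b i s0) (fun i => t i s0) (fun i => x i s0) (hbb s0 hs0)
        (htt s0 hs0) (hbt s0 hs0) (x0 s0) (x1 s0) (x2 s0)
      have f0 := hf 0 0
      have f1 := hf 1 1
      have f2 := hf 2 2
      simp only [h, if_true] at f0 f1 f2
      linarith [hbb s0 hs0, htt s0 hs0]
    · intro s hs
      simp only
      rw [← hxconst 0 s hs, ← hxconst 1 s hs, ← hxconst 2 s hs, x0, x1, x2]; ring
  · push Not at hall
    obtain ⟨s0, hs0, hk0⟩ := hall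
    let a : ℝ → ℝ := fun s => d 0 * b 0 s + d 1 * b 1 s + d 2 * b 2 s
    let a1 : ℝ → ℝ := fun s => d 0 * t 0 s + d 1 * t 1 s + d 2 * t 2 s
    have ha : ∀ s ∈ I, HasDerivAt a (a1 s) s := fun s hs =>
      (((hb 0 s hs).const_mul (d 0)).add ((hb 1 s hs).const_mul (d 1))).add
        ((hb 2 s hs).const_mul (d 2))
    have ha1 : ∀ s ∈ I, HasDerivAt a1 (d 0 * p 0 s + d 1 * p 1 s + d 2 * p 2 s) s := fun s hs =>
      (((ht 0 s hs).const_mul (d 0)).add ((ht 1 s hs).const_mul (d 1))).add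
        ((ht 2 s hs).const_mul (d 2))
    have hCx : ∀ s ∈ I, d 0 * x 0 s + d 1 * x 1 s + d 2 * x 2 s = C := hC
    have hka : ∀ s ∈ I, κ s * a1 s = 0 := by
      intro s hs
      have := uniq _ C _ s hs hCx
        ((((hx 0 s hs).const_mul (d 0)).add ((hx 1 s hs).const_mul (d 1))).add
        ((hx 2 s hs).const_mul (d 2)))
      simp only [a1]
      linarith
    have hac : ∀ s ∈ I, κ s ≠ 0 → a s = κ s * C := by
      intro s hs hk
      have hev : a1 =ᶠ[nhds s] fun _ => (0 : ℝ) := by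
        filter_upwards [hIopen.mem_nhds hs,
          (hκc.continuousAt (hIopen.mem_nhds hs)).eventually_ne hk] with y hy hy2
        exact (mul_eq_zero.mp (hka y hy)).resolve_left hy2
      have h0 := (ha1 s hs).unique ((hasDerivAt_const s (0 : ℝ)).congr_of_eventuallyEq hev)
      have p0 := pe s hs 0
      have p1 := pe s hs 1
      have p2 := pe s hs 2
      simp only [a]
      linear_combination -h0 + d 0 * p0 + d 1 * p1 + d 2 * p2 + κ s * hCx s hs
    have hD : ∀ s ∈ I, κ s ≠ 0 → d 0 * d 0 + d 1 * d 1 + d 2 * d 2 = (κ s ^ 2 + 1) * C ^ 2 := by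
      intro s hs hk
      have e0 := ex s hs d 0
      have e1 := ex s hs d 1
      have e2 := ex s hs d 2
      have h1 : a1 s = 0 := (mul_eq_zero.mp (hka s hs)).resolve_left hk
      have h2 := hac s hs hk
      have h3 := hCx s hs
      have : d 0 * d 0 + d 1 * d 1 + d 2 * d 2 = a s ^ 2 + a1 s ^ 2
          + (d 0 * x 0 s + d 1 * x 1 s + d 2 * x 2 s) ^ 2 := by
        simp only [a, a1]
        linear_combination d 0 * e0 + d 1 * e1 + d 2 * e2
      rw [this, h1, h2, h3]; ring
    have hCne : C ≠ 0 := by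
      intro h
      have := hD s0 hs0 hk0
      rw [h] at this
      apply hd
      funext i
      have q0 : d 0 = 0 := by nlinarith [mul_self_nonneg (d 0), mul_self_nonneg (d 1), mul_self_nonneg (d 2)]
      have q1 : d 1 = 0 := by nlinarith [mul_self_nonneg (d 0), mul_self_nonneg (d 1), mul_self_nonneg (d 2)]
      have q2 : d 2 = 0 := by nlinarith [mul_self_nonneg (d 0), mul_self_nonneg (d 1), mul_self_nonneg (d 2)]
      fin_cases i <;> simp [q0, q1, q2]
    have hval : ∀ s ∈ I, κ s ≠ 0 → κ s ^ 2 = κ s0 ^ 2 := by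
      intro s hs hk
      have h1 := hD s hs hk
      rw [hD s0 hs0 hk0] at h1
      have := mul_right_cancel₀ (pow_ne_zero 2 hCne) h1
      linarith
    have hpos : 0 < κ s0 ^ 2 := by positivity
    have hne : ∀ s ∈ I, κ s ≠ 0 := by
      intro s hs hk
      obtain ⟨y, hy, hy2⟩ := hIconv.isPreconnected.intermediate_value hs hs0 (hκc.pow 2)
        (show κ s0 ^ 2 / 2 ∈ Set.Icc (κ s ^ 2) (κ s0 ^ 2) by
          rw [hk]; constructor <;> linarith)
      change κ y ^ 2 = κ s0 ^ 2 / 2 at hy2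
      by_cases hky : κ y = 0
      · rw [hky] at hy2; linarith
      · have := hval y hy hky
        linarith
    refine ⟨d, hd, a s0, fun s hs => ?_⟩
    exact const_of I hIopen hIconv a (fun y hy => by
      have h1 : a1 y = 0 := (mul_eq_zero.mp (hka y hy)).resolve_left (hne y hy)
      simpa [h1] using ha y hy) s hs s0 hs0

end ConeAux

/-- If for a C² unit-speed curve `β` on the unit sphere of `ℝ³` the
function `⟪β × β', d⟫` is constant for some `d ≠ 0`, then `β` is an arc of a circle on the
sphere: `⟪β, e⟫` is constant for some `e ≠ 0`. -/
theorem constant_angle_cone_is_circular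
    (I : Set ℝ) (hIopen : IsOpen I) (hIne : I.Nonempty) (hIconv : Convex ℝ I)
    (β : ℝ → EuclideanSpace ℝ (Fin 3)) (d : EuclideanSpace ℝ (Fin 3)) (hd : d ≠ 0)
    (hC2 : ContDiffOn ℝ 2 β I)
    (hsph : ∀ s ∈ I, ‖β s‖ = 1)
    (hunit : ∀ s ∈ I, ‖deriv β s‖ = 1)
    (hconst : ∃ C : ℝ, ∀ s ∈ I, ⟪cross3 (β s) (deriv β s), d⟫_ℝ = C) :
    ∃ e : EuclideanSpace ℝ (Fin 3), e ≠ 0 ∧ ∃ c : ℝ, ∀ s ∈ I, ⟪β s, e⟫_ℝ = c := by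
  obtain ⟨C, hC⟩ := hconst
  have h2 : ContDiffOn ℝ (1 + 1) β I := by
    have : (1 + 1 : WithTop ℕ∞) = 2 := by norm_num
    rw [this]; exact hC2
  obtain ⟨hdβ, -, h1⟩ := (contDiffOn_succ_iff_deriv_of_isOpen hIopen).1 h2
  have h1' : ContDiffOn ℝ (0 + 1) (deriv β) I := by simpa using h1
  obtain ⟨hdT, -, h0⟩ := (contDiffOn_succ_iff_deriv_of_isOpen hIopen).1 h1'
  have hder : ∀ (f : ℝ → EuclideanSpace ℝ (Fin 3)), DifferentiableOn ℝ f I → ∀ i, ∀ s ∈ I,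
      HasDerivAt (fun s => f s i) (deriv f s i) s := by
    intro f hf i s hs
    have h := (hf.differentiableAt (hIopen.mem_nhds hs)).hasDerivAt
    exact (EuclideanSpace.proj i : EuclideanSpace ℝ (Fin 3) →L[ℝ] ℝ).hasFDerivAt.comp_hasDerivAt s h
  have hnorm : ∀ v : EuclideanSpace ℝ (Fin 3), ‖v‖ = 1 →
      v 0 * v 0 + v 1 * v 1 + v 2 * v 2 = 1 := by
    intro v hv
    have h := EuclideanSpace.real_norm_sq_eq v
    rw [hv, Fin.sum_univ_three] at h
    linarith
  obtain ⟨e, he, c, hc⟩ := ConeAux.main I hIopen hIne hIconv (fun i s => β s i)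
    (fun i s => deriv β s i) (fun i s => deriv (deriv β) s i) (fun i => d i)
    (by
      intro h
      apply hd
      ext i
      exact congrFun h i)
    (hder β hdβ) (hder _ hdT)
    (fun i => (EuclideanSpace.proj i : EuclideanSpace ℝ (Fin 3) →L[ℝ] ℝ).continuous.comp_continuousOn
      h0.continuousOn)
    (fun s hs => hnorm _ (hsph s hs)) (fun s hs => hnorm _ (hunit s hs)) C
    (by
      intro s hs
      have h := hC s hs
      simp [cross3, PiLp.inner_apply, Fin.sum_univ_three] at h
      linarith)
  refine ⟨WithLp.toLp 2 e, ?_, c, ?_⟩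
  · intro h
    apply he
    funext i
    exact congrArg (fun v : EuclideanSpace ℝ (Fin 3) => v i) h
  · intro s hs
    have h := hc s hs
    simp [PiLp.inner_apply, Fin.sum_univ_three]
    linarith
end

section
/- Let α: I → ℝ³ be a C² unit-speed curve on a nonempty open interval I ⊆ ℝ that is rectifying with vertex p ∈ ℝ³ and satisfies α''(s) ≠ 0 for all s ∈ I. Suppose there exist a unit vector d ∈ ℝ³ and a constant c ∈ ℝ such that ⟨α(s) − p, d⟩ = c·‖α(s) − p‖ for all s ∈ I (i.e. α lies on the circular cone with vertex p and axis d). Then α is a slant helix: the function s ↦ ⟨α''(s), d⟩/‖α''(s)‖ is constant on I. -/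
open scoped InnerProductSpace

lemma aux_parseval (e : Fin 3 → EuclideanSpace ℝ (Fin 3)) (he : Orthonormal ℝ e)
    (d : EuclideanSpace ℝ (Fin 3)) :
    ⟪e 0, d⟫_ℝ ^ 2 + ⟪e 1, d⟫_ℝ ^ 2 + ⟪e 2, d⟫_ℝ ^ 2 = ‖d‖ ^ 2 := by
  have hcard : Fintype.card (Fin 3) = Module.finrank ℝ (EuclideanSpace ℝ (Fin 3)) := by simp
  have hspan : ⊤ ≤ Submodule.span ℝ (Set.range e) := by
    have := (basisOfOrthonormalOfCardEqFinrank he hcard).span_eq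
    rw [coe_basisOfOrthonormalOfCardEqFinrank] at this
    exact this.ge
  have h := (OrthonormalBasis.mk he hspan).sum_sq_norm_inner_right d
  simpa [Fin.sum_univ_three] using h

lemma aux_point (b T A d : EuclideanSpace ℝ (Fin 3)) (K r c : ℝ) (hT : ‖T‖ = 1)
    (hTA : ⟪T, A⟫_ℝ = 0) (hbA : ⟪b, A⟫_ℝ = 0) (hA : A ≠ 0) (hd : ‖d‖ = 1)
    (hK : 0 < K) (hr : 0 < r) (hr2 : r ^ 2 = ⟪b, T⟫_ℝ ^ 2 + K) (hb : ‖b‖ = r)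
    (h0 : ⟪b, d⟫_ℝ = c * r) (h1 : ⟪T, d⟫_ℝ = c * (⟪b, T⟫_ℝ / r)) :
    (⟪A, d⟫_ℝ / ‖A‖) ^ 2 = 1 - c ^ 2 := by
  have hA' : ‖A‖ ≠ 0 := norm_ne_zero_iff.2 hA
  have hs : 0 < √K := Real.sqrt_pos.2 hK
  have hs2 : √K ^ 2 = K := Real.sq_sqrt hK.le
  set u := ⟪b, T⟫_ℝ with hu
  have hu' : ⟪T, b⟫_ℝ = u := real_inner_comm _ _
  have hTT : ⟪T, T⟫_ℝ = 1 := by rw [real_inner_self_eq_norm_sq, hT]; norm_num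
  have hbb : ⟪b, b⟫_ℝ = r ^ 2 := by rw [real_inner_self_eq_norm_sq, hb]
  have hAA : ⟪A, A⟫_ℝ = ‖A‖ ^ 2 := real_inner_self_eq_norm_sq A
  have hAT : ⟪A, T⟫_ℝ = 0 := by rw [real_inner_comm]; exact hTA
  have hAb : ⟪A, b⟫_ℝ = 0 := by rw [real_inner_comm]; exact hbA
  have hB : ‖b - u • T‖ ^ 2 = K := by
    have h := norm_sub_sq_real b (u • T)
    rw [inner_smul_right, ← hu, norm_smul, hT, hb, Real.norm_eq_abs, mul_one, sq_abs] at h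
    linarith
  have hB' : ‖b - u • T‖ = √K := by rw [← hB, Real.sqrt_sq (norm_nonneg _)]
  have he : Orthonormal ℝ ![T, (√K)⁻¹ • (b - u • T), ‖A‖⁻¹ • A] := by
    refine ⟨?_, ?_⟩
    · intro i
      fin_cases i
      · exact hT
      · change ‖(√K)⁻¹ • (b - u • T)‖ = 1
        rw [norm_smul, hB', norm_inv, Real.norm_of_nonneg hs.le, inv_mul_cancel₀ hs.ne']
      · change ‖‖A‖⁻¹ • A‖ = 1
        rw [norm_smul, norm_inv, norm_norm, inv_mul_cancel₀ hA']
    · intro i j hij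
      fin_cases i <;> fin_cases j <;> first | exact absurd rfl hij | skip
      all_goals
        simp [inner_smul_left, inner_smul_right, inner_sub_left, inner_sub_right,
          hTA, hbA, hAT, hAb, hu', ← hu, hT]
  have h := aux_parseval _ he d
  simp [inner_smul_left, inner_sub_left, h0, h1, hd] at h
  have e1 : ((√K)⁻¹ * (c * r - u * (c * (u / r)))) ^ 2 = c ^ 2 * K / r ^ 2 := by
    have : c * r - u * (c * (u / r)) = c * K / r := by
      field_simp
      rw [hr2]; ring
    rw [this, mul_pow, inv_pow, hs2]
    field_simp
  rw [e1] at h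
  have e2 : (c * (u / r)) ^ 2 + c ^ 2 * K / r ^ 2 = c ^ 2 := by
    have : (c * (u / r)) ^ 2 + c ^ 2 * K / r ^ 2 = c ^ 2 * (u ^ 2 + K) / r ^ 2 := by
      field_simp
    rw [this, ← hr2]; field_simp
  rw [div_eq_inv_mul]
  linarith

/-- A C² unit-speed rectifying curve in `ℝ³` with nowhere-vanishing
acceleration that lies on a circular cone (vertex `p`, unit axis `d`, i.e.
`⟪α - p, d⟫ = c‖α - p‖`) is a slant helix: `⟪α'', d⟫/‖α''‖` is constant. -/
theorem rectifying_on_circular_cone_is_slant_helix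
    (I : Set ℝ) (hIopen : IsOpen I) (hIne : I.Nonempty) (hIconv : Convex ℝ I)
    (α : ℝ → EuclideanSpace ℝ (Fin 3)) (p : EuclideanSpace ℝ (Fin 3))
    (hC2 : ContDiffOn ℝ 2 α I)
    (hunit : ∀ s ∈ I, ‖deriv α s‖ = 1)
    (hrect : ∀ s ∈ I, ⟪α s - p, deriv (deriv α) s⟫_ℝ = 0)
    (hacc : ∀ s ∈ I, deriv (deriv α) s ≠ 0)
    (d : EuclideanSpace ℝ (Fin 3)) (hd : ‖d‖ = 1) (c : ℝ)
    (hcone : ∀ s ∈ I, ⟪α s - p, d⟫_ℝ = c * ‖α s - p‖) :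
    ∃ C : ℝ, ∀ s ∈ I, ⟪deriv (deriv α) s, d⟫_ℝ / ‖deriv (deriv α) s‖ = C := by
  have hα : ∀ s ∈ I, HasDerivAt (fun t => α t - p) (deriv α s) s := fun s hs =>
    (((hC2.differentiableOn (by norm_num)).differentiableAt
      (hIopen.mem_nhds hs)).hasDerivAt).sub_const p
  have hT : ∀ s ∈ I, HasDerivAt (deriv α) (deriv (deriv α) s) s := fun s hs =>
    ((((contDiffOn_succ_iff_deriv_of_isOpen (n := 1) hIopen).1 hC2).2.2.differentiableOn
      (by norm_num)).differentiableAt (hIopen.mem_nhds hs)).hasDerivAt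
  have hTT : ∀ s ∈ I, ⟪deriv α s, deriv α s⟫_ℝ = 1 := fun s hs => by
    rw [real_inner_self_eq_norm_sq, hunit s hs]; norm_num
  -- uniqueness of derivatives of functions agreeing on `I`
  have huniq : ∀ (f g : ℝ → ℝ), (∀ t ∈ I, f t = g t) → ∀ s ∈ I, ∀ x y : ℝ,
      HasDerivAt f x s → HasDerivAt g y s → x = y := by
    intro f g hfg s hs x y hf hg
    refine hf.unique (hg.congr_of_eventuallyEq ?_)
    filter_upwards [hIopen.mem_nhds hs] with t ht using hfg t ht
  have hTA : ∀ s ∈ I, ⟪deriv α s, deriv (deriv α) s⟫_ℝ = 0 := by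
    intro s hs
    have h := huniq _ (fun _ => (1 : ℝ)) hTT s hs _ _ ((hT s hs).inner ℝ (hT s hs))
      (hasDerivAt_const s _)
    rw [real_inner_comm (deriv α s) (deriv (deriv α) s)] at h
    linarith [real_inner_comm (deriv α s) (deriv (deriv α) s)]
  set g : ℝ → ℝ := fun t => ⟪α t - p, deriv α t⟫_ℝ with hgdef
  have hg : ∀ s ∈ I, HasDerivAt g 1 s := by
    intro s hs
    have h := (hα s hs).inner ℝ (hT s hs)
    rwa [hrect s hs, hTT s hs, zero_add] at h
  set k : ℝ → ℝ := fun t => ⟪α t - p, α t - p⟫_ℝ - g t ^ 2 with hkdef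
  have hk : ∀ s ∈ I, HasDerivAt k 0 s := by
    intro s hs
    have h := ((hα s hs).inner ℝ (hα s hs)).sub ((hg s hs).pow 2)
    refine h.congr_deriv ?_
    have e : ⟪deriv α s, α s - p⟫_ℝ = g s := real_inner_comm _ _
    rw [e]
    change g s + g s - _ = 0
    norm_num
    ring
  obtain ⟨s₀, hs₀⟩ := hIne
  obtain ⟨K, hK⟩ : ∃ K, ∀ s ∈ I, k s = K := ⟨k s₀, fun s hs =>
    hIopen.is_const_of_deriv_eq_zero hIconv.isPreconnected
      (fun t ht => (hk t ht).differentiableAt.differentiableWithinAt)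
      (fun t ht => (hk t ht).deriv) hs hs₀⟩
  have hkn : ∀ s ∈ I, k s = ‖(α s - p) - g s • deriv α s‖ ^ 2 := by
    intro s hs
    have e : ⟪deriv α s, α s - p⟫_ℝ = g s := real_inner_comm _ _
    have e' : ⟪α s - p, deriv α s⟫_ℝ = g s := rfl
    have h := norm_sub_sq_real (α s - p) (g s • deriv α s)
    rw [inner_smul_right, e', norm_smul, hunit s hs, Real.norm_eq_abs, mul_one, sq_abs] at h
    rw [h]
    simp only [hkdef, real_inner_self_eq_norm_sq]
    ring
  have hKpos : 0 < K := by
    rcases lt_or_eq_of_le (show 0 ≤ K by rw [← hK s₀ hs₀, hkn s₀ hs₀]; positivity) with h | h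
    · exact h
    exfalso
    have hz : ∀ s ∈ I, α s - p = g s • deriv α s := by
      intro s hs
      have := hkn s hs
      rw [hK s hs, ← h] at this
      exact sub_eq_zero.1 (norm_eq_zero.1 (pow_eq_zero_iff (by norm_num) |>.1 this.symm))
    have hg0 : ∀ s ∈ I, g s = 0 := by
      intro s hs
      have h1 : HasDerivAt (fun t => α t - p)
          (g s • deriv (deriv α) s + (1 : ℝ) • deriv α s) s := by
        refine ((hg s hs).smul (hT s hs)).congr_of_eventuallyEq ?_
        filter_upwards [hIopen.mem_nhds hs] with t ht using hz t ht
      have h2 := (hα s hs).unique h1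
      rw [one_smul] at h2
      have h3 : g s • deriv (deriv α) s = 0 := by simpa using h2
      exact (smul_eq_zero.1 h3).resolve_right (hacc s hs)
    exact one_ne_zero (huniq g (fun _ => 0) hg0 s₀ hs₀ _ _ (hg s₀ hs₀) (hasDerivAt_const _ _))
  set r : ℝ → ℝ := fun t => √(g t ^ 2 + K) with hrdef
  have hrpos : ∀ s, 0 < r s := fun s => Real.sqrt_pos.2 (by positivity)
  have hr2 : ∀ s, r s ^ 2 = g s ^ 2 + K := fun s => Real.sq_sqrt (by positivity)
  have hrn : ∀ s ∈ I, ‖α s - p‖ = r s := by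
    intro s hs
    have h := hK s hs
    simp only [hkdef, real_inner_self_eq_norm_sq] at h
    rw [← Real.sqrt_sq (norm_nonneg (α s - p))]
    simp only [hrdef]
    congr 1
    linarith
  have hr : ∀ s ∈ I, HasDerivAt r (g s / r s) s := by
    intro s hs
    have h := (((hg s hs).pow 2).add_const K).sqrt
      (show g s ^ 2 + K ≠ 0 by positivity)
    refine h.congr_deriv ?_
    change _ / (2 * r s) = _
    have := (hrpos s).ne'
    norm_num
    field_simp
  have h0 : ∀ s ∈ I, ⟪α s - p, d⟫_ℝ = c * r s := fun s hs => by rw [hcone s hs, hrn s hs]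
  have h1 : ∀ s ∈ I, ⟪deriv α s, d⟫_ℝ = c * (g s / r s) := by
    intro s hs
    have h := (hα s hs).inner ℝ (hasDerivAt_const s d)
    have := huniq _ _ h0 s hs _ _ h ((hr s hs).const_mul c)
    simpa using this
  have h2 : ∀ s ∈ I, ⟪deriv (deriv α) s, d⟫_ℝ = c * (K / r s ^ 3) := by
    intro s hs
    have h := (hT s hs).inner ℝ (hasDerivAt_const s d)
    have := huniq _ _ h1 s hs _ _ h
      (((hg s hs).div (hr s hs) (hrpos s).ne').const_mul c)
    simp only [inner_zero_right, zero_add] at this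
    rw [this]
    congr 1
    have h3 := (hrpos s).ne'
    have h4 := hr2 s
    field_simp
    linarith
  have hsq : ∀ s ∈ I, (⟪deriv (deriv α) s, d⟫_ℝ / ‖deriv (deriv α) s‖) ^ 2 = 1 - c ^ 2 :=
    fun s hs => aux_point (α s - p) (deriv α s) _ d K (r s) c (hunit s hs) (hTA s hs)
      (hrect s hs) (hacc s hs) hd hKpos (hrpos s) (hr2 s) (hrn s hs) (h0 s hs) (h1 s hs)
  rcases le_total 0 c with hc | hc
  · refine ⟨√(1 - c ^ 2), fun s hs => ?_⟩
    rw [← hsq s hs, Real.sqrt_sq]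
    rw [h2 s hs]
    have := hrpos s
    positivity
  · refine ⟨-√(1 - c ^ 2), fun s hs => ?_⟩
    rw [← hsq s hs, ← neg_sq, Real.sqrt_sq, neg_neg]
    rw [h2 s hs, ← neg_div, ← neg_mul]
    have := hrpos s
    have hc' : 0 ≤ -c := by linarith
    positivity
end

section
/- Let α: I → ℝ³ be a C² unit-speed curve on a nonempty open interval I ⊆ ℝ that is rectifying with vertex p ∈ ℝ³ and satisfies α''(s) ≠ 0 for all s ∈ I. Suppose α is a slant helix: there exists a unit vector d ∈ ℝ³ such that s ↦ ⟨α''(s), d⟩/‖α''(s)‖ is constant on I. Then the cone containing α is circular: there exist a unit vector e ∈ ℝ³ and a constant c ∈ ℝ such that ⟨α(s) − p, e⟩ = c·‖α(s) − p‖ for all s ∈ I. -/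
open scoped InnerProductSpace

lemma rsh_inner (x y : EuclideanSpace ℝ (Fin 3)) :
    ⟪x, y⟫_ℝ = x 0 * y 0 + x 1 * y 1 + x 2 * y 2 := by
  simp [PiLp.inner_apply, Fin.sum_univ_three]
  ring

lemma rsh_normsq (x : EuclideanSpace ℝ (Fin 3)) :
    ‖x‖ ^ 2 = x 0 * x 0 + x 1 * x 1 + x 2 * x 2 := by
  rw [← real_inner_self_eq_norm_sq, rsh_inner]

/-- The triple product. -/
def rshG (d r T : EuclideanSpace ℝ (Fin 3)) : ℝ :=
  d 0 * (r 1 * T 2 - r 2 * T 1) + d 1 * (r 2 * T 0 - r 0 * T 2) + d 2 * (r 0 * T 1 - r 1 * T 0)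

lemma rsh_cross (r T A : EuclideanSpace ℝ (Fin 3)) (h1 : ⟪r, A⟫_ℝ = 0) (h2 : ⟪T, A⟫_ℝ = 0) :
    A 1 * (r 0 * T 1 - r 1 * T 0) = A 2 * (r 2 * T 0 - r 0 * T 2) ∧
    A 2 * (r 1 * T 2 - r 2 * T 1) = A 0 * (r 0 * T 1 - r 1 * T 0) ∧
    A 0 * (r 2 * T 0 - r 0 * T 2) = A 1 * (r 1 * T 2 - r 2 * T 1) := by
  rw [rsh_inner] at h1 h2
  refine ⟨?_, ?_, ?_⟩
  · linear_combination r 0 * h2 - T 0 * h1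
  · linear_combination r 1 * h2 - T 1 * h1
  · linear_combination r 2 * h2 - T 2 * h1

lemma rsh_alg1 (d r T A : EuclideanSpace ℝ (Fin 3)) (h1 : ⟪r, A⟫_ℝ = 0) (h2 : ⟪T, A⟫_ℝ = 0) :
    rshG d r T ^ 2 * ‖A‖ ^ 2 = ⟪A, d⟫_ℝ ^ 2 * (‖r‖ ^ 2 * ‖T‖ ^ 2 - ⟪r, T⟫_ℝ ^ 2) := by
  obtain ⟨e0, e1, e2⟩ := rsh_cross r T A h1 h2
  rw [rsh_normsq, rsh_normsq, rsh_normsq, rsh_inner, rsh_inner, rshG]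
  obtain ⟨c0, hc0⟩ : ∃ c, c = r 1 * T 2 - r 2 * T 1 := ⟨_, rfl⟩
  obtain ⟨c1, hc1⟩ : ∃ c, c = r 2 * T 0 - r 0 * T 2 := ⟨_, rfl⟩
  obtain ⟨c2, hc2⟩ : ∃ c, c = r 0 * T 1 - r 1 * T 0 := ⟨_, rfl⟩
  have hq : (r 0 * r 0 + r 1 * r 1 + r 2 * r 2) * (T 0 * T 0 + T 1 * T 1 + T 2 * T 2)
      - (r 0 * T 0 + r 1 * T 1 + r 2 * T 2) ^ 2 = c0 ^ 2 + c1 ^ 2 + c2 ^ 2 := by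
    rw [hc0, hc1, hc2]; ring
  rw [hq]
  rw [← hc0, ← hc1, ← hc2]
  rw [← hc1, ← hc2] at e0
  rw [← hc0, ← hc2] at e1
  rw [← hc0, ← hc1] at e2
  have k0 : (d 0 * c0 + d 1 * c1 + d 2 * c2) * A 0 = (A 0 * d 0 + A 1 * d 1 + A 2 * d 2) * c0 := by
    linear_combination d 1 * e2 - d 2 * e1
  have k1 : (d 0 * c0 + d 1 * c1 + d 2 * c2) * A 1 = (A 0 * d 0 + A 1 * d 1 + A 2 * d 2) * c1 := by
    linear_combination d 2 * e0 - d 0 * e2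
  have k2 : (d 0 * c0 + d 1 * c1 + d 2 * c2) * A 2 = (A 0 * d 0 + A 1 * d 1 + A 2 * d 2) * c2 := by
    linear_combination d 0 * e1 - d 1 * e0
  have := congrArg (· ^ 2) k0
  have := congrArg (· ^ 2) k1
  have := congrArg (· ^ 2) k2
  simp only at *
  linarith

lemma rsh_alg2 (d r T A : EuclideanSpace ℝ (Fin 3)) (h1 : ⟪r, A⟫_ℝ = 0) (h2 : ⟪T, A⟫_ℝ = 0)
    (hA : A ≠ 0) (hq : ‖r‖ ^ 2 * ‖T‖ ^ 2 - ⟪r, T⟫_ℝ ^ 2 ≠ 0) (hG : rshG d r A = 0) :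
    ⟪r, T⟫_ℝ * ⟪r, d⟫_ℝ = ‖r‖ ^ 2 * ⟪T, d⟫_ℝ := by
  obtain ⟨e0, e1, e2⟩ := rsh_cross r T A h1 h2
  rw [rsh_normsq, rsh_normsq, rsh_inner] at hq
  rw [rsh_normsq, rsh_inner, rsh_inner, rsh_inner]
  rw [rshG] at hG
  obtain ⟨c0, hc0⟩ : ∃ c, c = r 1 * T 2 - r 2 * T 1 := ⟨_, rfl⟩
  obtain ⟨c1, hc1⟩ : ∃ c, c = r 2 * T 0 - r 0 * T 2 := ⟨_, rfl⟩
  obtain ⟨c2, hc2⟩ : ∃ c, c = r 0 * T 1 - r 1 * T 0 := ⟨_, rfl⟩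
  have hq' : (r 0 * r 0 + r 1 * r 1 + r 2 * r 2) * (T 0 * T 0 + T 1 * T 1 + T 2 * T 2)
      - (r 0 * T 0 + r 1 * T 1 + r 2 * T 2) ^ 2 = c0 ^ 2 + c1 ^ 2 + c2 ^ 2 := by
    rw [hc0, hc1, hc2]; ring
  rw [hq'] at hq
  rw [← hc1, ← hc2] at e0
  rw [← hc0, ← hc2] at e1
  rw [← hc0, ← hc1] at e2
  obtain ⟨m, hm⟩ : ∃ m, m = A 0 * c0 + A 1 * c1 + A 2 * c2 := ⟨_, rfl⟩
  have k0 : A 0 * (c0 ^ 2 + c1 ^ 2 + c2 ^ 2) = m * c0 := by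
    rw [hm]; linear_combination c1 * e2 - c2 * e1
  have k1 : A 1 * (c0 ^ 2 + c1 ^ 2 + c2 ^ 2) = m * c1 := by
    rw [hm]; linear_combination c2 * e0 - c0 * e2
  have k2 : A 2 * (c0 ^ 2 + c1 ^ 2 + c2 ^ 2) = m * c2 := by
    rw [hm]; linear_combination c0 * e1 - c1 * e0
  have hm0 : m ≠ 0 := by
    rintro hm0
    rw [hm0, zero_mul] at k0 k1 k2
    apply hA
    ext i
    fin_cases i
    · simpa [hq] using k0
    · simpa [hq] using k1
    · simpa [hq] using k2
  apply mul_left_cancel₀ hm0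
  have k : m * (d 0 * (r 1 * c2 - r 2 * c1) + d 1 * (r 2 * c0 - r 0 * c2)
      + d 2 * (r 0 * c1 - r 1 * c0)) = 0 := by
    linear_combination (c0 ^ 2 + c1 ^ 2 + c2 ^ 2) * hG
      - (d 1 * r 2 - d 2 * r 1) * k0 - (d 2 * r 0 - d 0 * r 2) * k1 - (d 0 * r 1 - d 1 * r 0) * k2
  rw [hc0, hc1, hc2] at k
  linear_combination k

lemma rsh_coord {f : ℝ → EuclideanSpace ℝ (Fin 3)} {v : EuclideanSpace ℝ (Fin 3)} {s : ℝ}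
    (h : HasDerivAt f v s) (i : Fin 3) : HasDerivAt (fun t => f t i) (v i) s :=
  ((EuclideanSpace.proj (𝕜 := ℝ) i).hasFDerivAt.comp_hasDerivAt s h :)

lemma rsh_G_deriv (d : EuclideanSpace ℝ (Fin 3)) {r T : ℝ → EuclideanSpace ℝ (Fin 3)}
    {A : EuclideanSpace ℝ (Fin 3)} {s : ℝ}
    (hr : HasDerivAt r (T s) s) (hT : HasDerivAt T A s) :
    HasDerivAt (fun t => rshG d (r t) (T t)) (rshG d (r s) A) s := by
  have a := rsh_coord hr
  have b := rsh_coord hT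
  unfold rshG
  have := (((((a 1).mul (b 2)).sub ((a 2).mul (b 1))).const_mul (d 0)).add
    ((((a 2).mul (b 0)).sub ((a 0).mul (b 2))).const_mul (d 1))).add
    ((((a 0).mul (b 1)).sub ((a 1).mul (b 0))).const_mul (d 2))
  refine HasDerivAt.congr_deriv this ?_
  ring

lemma rsh_const {I : Set ℝ} (ho : IsOpen I) (hc : Convex ℝ I) {f : ℝ → ℝ}
    (h : ∀ s ∈ I, HasDerivAt f 0 s) {x y : ℝ} (hx : x ∈ I) (hy : y ∈ I) : f x = f y :=
  ho.is_const_of_deriv_eq_zero hc.isPreconnected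
    (fun s hs => (h s hs).differentiableAt.differentiableWithinAt)
    (fun s hs => (h s hs).deriv) hx hy

/-- On an open set, if a function is constant there then derivative vanishes. -/
lemma rsh_deriv_of_const {E : Type*} [NormedAddCommGroup E] [NormedSpace ℝ E]
    {I : Set ℝ} (ho : IsOpen I) {f : ℝ → E} {v c : E} {s : ℝ}
    (hs : s ∈ I) (h : ∀ t ∈ I, f t = c) (hf : HasDerivAt f v s) : v = 0 := by
  have : f =ᶠ[nhds s] fun _ => c := by
    filter_upwards [ho.mem_nhds hs] with t ht using h t ht
  exact hf.unique ((hasDerivAt_const s c).congr_of_eventuallyEq this)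

/-- If a C² unit-speed rectifying curve in `ℝ³` (vertex `p`, nowhere
vanishing acceleration) is a slant helix (its principal normal `α''/‖α''‖` makes a
constant angle with a unit vector `d`), then the cone containing it is circular: there
are a unit vector `e` and a constant `c` with `⟪α - p, e⟫ = c‖α - p‖` on `I`. -/
theorem rectifying_slant_helix_on_circular_cone
    (I : Set ℝ) (hIopen : IsOpen I) (hIne : I.Nonempty) (hIconv : Convex ℝ I)
    (α : ℝ → EuclideanSpace ℝ (Fin 3)) (p : EuclideanSpace ℝ (Fin 3))
    (hC2 : ContDiffOn ℝ 2 α I)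
    (hunit : ∀ s ∈ I, ‖deriv α s‖ = 1)
    (hrect : ∀ s ∈ I, ⟪α s - p, deriv (deriv α) s⟫_ℝ = 0)
    (hacc : ∀ s ∈ I, deriv (deriv α) s ≠ 0)
    (d : EuclideanSpace ℝ (Fin 3)) (hd : ‖d‖ = 1)
    (hslant : ∃ C : ℝ, ∀ s ∈ I, ⟪deriv (deriv α) s, d⟫_ℝ / ‖deriv (deriv α) s‖ = C) :
    ∃ e : EuclideanSpace ℝ (Fin 3), ‖e‖ = 1 ∧
      ∃ c : ℝ, ∀ s ∈ I, ⟪α s - p, e⟫_ℝ = c * ‖α s - p‖ := by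
  obtain ⟨C, hC⟩ := hslant
  obtain ⟨s₀, hs₀⟩ := hIne
  set T := deriv α with hTdef
  set A := deriv T with hAdef
  obtain ⟨r, hrdef⟩ : ∃ r : ℝ → EuclideanSpace ℝ (Fin 3), r = fun s => α s - p := ⟨_, rfl⟩
  have hr' : ∀ s, α s - p = r s := fun s => by rw [hrdef]
  simp only [hr'] at hrect ⊢
  have hα : ∀ s ∈ I, HasDerivAt α (T s) s := fun s hs =>
    ((hC2.differentiableOn (by norm_num)).differentiableAt (hIopen.mem_nhds hs)).hasDerivAt
  have hr : ∀ s ∈ I, HasDerivAt r (T s) s := fun s hs => by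
    rw [hrdef]; exact (hα s hs).sub_const p
  have hT : ∀ s ∈ I, HasDerivAt T (A s) s := fun s hs => by
    have h1 : ContDiffOn ℝ 1 T I := hC2.deriv_of_isOpen hIopen (by norm_num)
    exact ((h1.differentiableOn (by norm_num)).differentiableAt (hIopen.mem_nhds hs)).hasDerivAt
  have hTT : ∀ s ∈ I, ⟪T s, T s⟫_ℝ = 1 := fun s hs => by
    rw [real_inner_self_eq_norm_sq, hunit s hs]; norm_num
  have hTA : ∀ s ∈ I, ⟪T s, A s⟫_ℝ = 0 := fun s hs => by
    have := rsh_deriv_of_const hIopen hs hTT ((hT s hs).inner ℝ (hT s hs))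
    rw [real_inner_comm (T s) (A s)] at this
    linarith
  -- the function `⟪r, T⟫` has derivative one
  have hrT : ∀ s ∈ I, HasDerivAt (fun t => ⟪r t, T t⟫_ℝ) 1 s := fun s hs => by
    refine ((hr s hs).inner ℝ (hT s hs)).congr_deriv ?_
    rw [hrect s hs, hTT s hs, zero_add]
  have hrr : ∀ s ∈ I, HasDerivAt (fun t => ⟪r t, r t⟫_ℝ) (2 * ⟪r s, T s⟫_ℝ) s := fun s hs => by
    refine ((hr s hs).inner ℝ (hr s hs)).congr_deriv ?_
    rw [real_inner_comm (r s) (T s)]; ring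
  obtain ⟨q, hq⟩ : ∃ q, ∀ s ∈ I, ⟪r s, r s⟫_ℝ - ⟪r s, T s⟫_ℝ ^ 2 = q := by
    refine ⟨_, fun s hs => rsh_const hIopen hIconv
      (f := fun s => ⟪r s, r s⟫_ℝ - ⟪r s, T s⟫_ℝ ^ 2) (fun t ht => ?_) hs hs₀⟩
    refine ((hrr t ht).sub ((hrT t ht).pow 2)).congr_deriv ?_
    simp
  have hq' : ∀ s ∈ I, ‖r s‖ ^ 2 * ‖T s‖ ^ 2 - ⟪r s, T s⟫_ℝ ^ 2 = q := fun s hs => by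
    rw [← hq s hs, hunit s hs, real_inner_self_eq_norm_sq]; ring
  have hq0 : q ≠ 0 := by
    intro h0
    have hz : ∀ s ∈ I, r s - ⟪r s, T s⟫_ℝ • T s = 0 := fun s hs => by
      have h1 := hq s hs
      have h2 := hTT s hs
      have : ⟪r s - ⟪r s, T s⟫_ℝ • T s, r s - ⟪r s, T s⟫_ℝ • T s⟫_ℝ = 0 := by
        simp only [inner_sub_left, inner_sub_right, inner_smul_left, inner_smul_right, h2,
          real_inner_comm (r s) (T s), conj_trivial]
        linear_combination h1 + h0
      exact inner_self_eq_zero.mp this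
    have hz2 : ∀ s ∈ I, ⟪r s, T s⟫_ℝ = 0 := fun s hs => by
      have := rsh_deriv_of_const hIopen hs hz
        ((hr s hs).sub ((hrT s hs).smul (hT s hs)))
      have h3 : ⟪r s, T s⟫_ℝ • A s = 0 := by
        simpa using this
      exact (smul_eq_zero.mp h3).resolve_right (hacc s hs)
    exact one_ne_zero (rsh_deriv_of_const hIopen hs₀ hz2 (hrT s₀ hs₀))
  have hg : ∀ s ∈ I, rshG d (r s) (T s) ^ 2 = C ^ 2 * q := fun s hs => by
    have h1 := rsh_alg1 d (r s) (T s) (A s) (hrect s hs) (hTA s hs)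
    rw [hq' s hs] at h1
    have hA : ‖A s‖ ≠ 0 := norm_ne_zero_iff.mpr (hacc s hs)
    have h2 := hC s hs
    rw [div_eq_iff hA] at h2
    rw [h2] at h1
    apply mul_right_cancel₀ (pow_ne_zero 2 hA)
    rw [h1]; ring
  have hg' : ∀ s ∈ I, rshG d (r s) (A s) = 0 := fun s hs => by
    have hd1 := rsh_G_deriv d (hr s hs) (hT s hs)
    by_cases h0 : C ^ 2 * q = 0
    · refine rsh_deriv_of_const hIopen (c := 0) hs (fun t ht => ?_) hd1
      have := hg t ht
      rw [h0] at this
      exact pow_eq_zero_iff (two_ne_zero) |>.mp this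
    · have h1 := rsh_deriv_of_const hIopen hs hg (hd1.pow 2)
      have h2 : rshG d (r s) (T s) ≠ 0 := by
        intro h; apply h0; rw [← hg s hs, h]; norm_num
      simpa [h2] using h1
  have hkey : ∀ s ∈ I, ⟪r s, T s⟫_ℝ * ⟪r s, d⟫_ℝ = ‖r s‖ ^ 2 * ⟪T s, d⟫_ℝ := fun s hs =>
    rsh_alg2 d (r s) (T s) (A s) (hrect s hs) (hTA s hs) (hacc s hs)
      (by rw [hq' s hs]; exact hq0) (hg' s hs)
  have hr0 : ∀ s ∈ I, r s ≠ 0 := fun s hs h => by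
    apply hq0; rw [← hq s hs, h]; simp
  have hnorm : ∀ s ∈ I, HasDerivAt (fun t => ‖r t‖) (⟪r s, T s⟫_ℝ / ‖r s‖) s := fun s hs => by
    have hne : ⟪r s, r s⟫_ℝ ≠ 0 := inner_self_ne_zero.mpr (hr0 s hs)
    have h1 := (hrr s hs).sqrt hne
    simp only [real_inner_self_eq_norm_sq, Real.sqrt_sq (norm_nonneg _)] at h1
    refine h1.congr_deriv ?_
    rw [mul_div_mul_left _ _ two_ne_zero]
  refine ⟨d, hd, ⟪r s₀, d⟫_ℝ / ‖r s₀‖, fun s hs => ?_⟩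
  rw [← div_eq_iff (norm_ne_zero_iff.mpr (hr0 s hs))]
  refine rsh_const hIopen hIconv (f := fun s => ⟪r s, d⟫_ℝ / ‖r s‖) (fun t ht => ?_) hs hs₀
  have hn := norm_ne_zero_iff.mpr (hr0 t ht)
  have h1 : HasDerivAt (fun t => ⟪r t, d⟫_ℝ) ⟪T t, d⟫_ℝ t := by
    simpa using (hr t ht).inner ℝ (hasDerivAt_const t d)
  refine (h1.div (hnorm t ht) hn).congr_deriv ?_
  have := hkey t ht
  field_simp
  linear_combination -this
end

section
/- Let m ≥ 1, let U ⊆ ℝᵐ be a nonempty open connected set, and let β: U → ℝ^{m+2} be a C¹ map with ‖β(t)‖ = 1 for all t ∈ U and with the partial derivatives ∂₁β(t), …, ∂ₘβ(t) linearly independent at every t ∈ U (an immersed hypersurface of the unit sphere). Suppose there are d ∈ ℝ^{m+2} and c ∈ ℝ with ⟨β(t), d⟩ = c for all t ∈ U (β lies in a small sphere, so the cone over β is a circular hypercone). Let ξ: U → ℝ^{m+2} be a differentiable map with ‖ξ(t)‖ = 1, ⟨ξ(t), β(t)⟩ = 0 and ⟨ξ(t), ∂ᵢβ(t)⟩ =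 0 for all t ∈ U and all i ∈ {1, …, m} (the unit normal of the hypercone along β). Then the function t ↦ ⟨ξ(t), d⟩ is constant on U. -/
open scoped InnerProductSpace

lemma aux_zero {m : ℕ} (T : Fin m → EuclideanSpace ℝ (Fin (m + 2)))
    (hT : LinearIndependent ℝ T) (b x w : EuclideanSpace ℝ (Fin (m + 2)))
    (hb : ‖b‖ = 1) (hx : ‖x‖ = 1) (hxb : ⟪x, b⟫_ℝ = 0)
    (hbT : ∀ i, ⟪b, T i⟫_ℝ = 0) (hxT : ∀ i, ⟪x, T i⟫_ℝ = 0) (hwT : ∀ i, ⟪w, T i⟫_ℝ = 0)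
    (hwb : ⟪w, b⟫_ℝ = 0) (hwx : ⟪w, x⟫_ℝ = 0) : w = 0 := by
  by_contra hw
  set S := Submodule.span ℝ (Set.range T) with hS
  have hSd : Module.finrank ℝ S = m := by
    rw [hS, finrank_span_eq_card hT, Fintype.card_fin]
  have hadd := Submodule.finrank_add_finrank_orthogonal S
  rw [hSd, finrank_euclideanSpace_fin] at hadd
  have mem : ∀ v : EuclideanSpace ℝ (Fin (m + 2)), (∀ i, ⟪v, T i⟫_ℝ = 0) → v ∈ Sᗮ := by
    intro v hv
    rw [Submodule.mem_orthogonal']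
    intro u hu
    induction hu using Submodule.span_induction with
    | mem y hy => obtain ⟨i, rfl⟩ := hy; exact hv i
    | zero => simp
    | add y z _ _ h1 h2 => rw [inner_add_right, h1, h2, add_zero]
    | smul a y _ h1 => rw [inner_smul_right, h1, mul_zero]
  have hb0 : b ≠ 0 := by rintro rfl; simp at hb
  have hx0 : x ≠ 0 := by rintro rfl; simp at hx
  have li : LinearIndependent ℝ (![⟨b, mem b hbT⟩, ⟨x, mem x hxT⟩, ⟨w, mem w hwT⟩] : Fin 3 → Sᗮ) := by
    apply linearIndependent_of_ne_zero_of_inner_eq_zero (𝕜 := ℝ)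
    · intro i
      fin_cases i <;> simp [hb0, hx0, hw]
    · have hbx := hxb
      have hbw := hwb
      have hxw := hwx
      rw [real_inner_comm] at hbx hbw hxw
      intro i j hij
      fin_cases i <;> fin_cases j <;> simp_all
  have := li.fintype_card_le_finrank
  rw [Fintype.card_fin] at this
  omega

/-- Let `β : U → ℝ^{m+2}` (`U ⊆ ℝᵐ` open, connected, nonempty) be a C¹
immersed hypersurface of the unit sphere lying in a small sphere `⟪β, d⟫ = c`, and let `ξ`
be the unit normal of the hypercone over `β` along `β` (unit, orthogonal to `β` and to all
partial derivatives `∂ᵢβ`). Then `⟪ξ, d⟫` is constant on `U`: a circular hypercone makes a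
constant angle with its axis. -/
theorem circular_hypercone_constant_angle
    (m : ℕ) (hm : 1 ≤ m)
    (U : Set (EuclideanSpace ℝ (Fin m))) (hUopen : IsOpen U) (hUconn : IsConnected U)
    (β ξ : EuclideanSpace ℝ (Fin m) → EuclideanSpace ℝ (Fin (m + 2)))
    (hβC1 : ContDiffOn ℝ 1 β U)
    (hβsph : ∀ t ∈ U, ‖β t‖ = 1)
    (hβimm : ∀ t ∈ U,
      LinearIndependent ℝ (fun i : Fin m => fderiv ℝ β t (EuclideanSpace.single i 1)))
    (d : EuclideanSpace ℝ (Fin (m + 2))) (c : ℝ)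
    (hsmall : ∀ t ∈ U, ⟪β t, d⟫_ℝ = c)
    (hξdiff : DifferentiableOn ℝ ξ U)
    (hξunit : ∀ t ∈ U, ‖ξ t‖ = 1)
    (hξβ : ∀ t ∈ U, ⟪ξ t, β t⟫_ℝ = 0)
    (hξtang : ∀ t ∈ U, ∀ i : Fin m,
      ⟪ξ t, fderiv ℝ β t (EuclideanSpace.single i 1)⟫_ℝ = 0) :
    ∃ C : ℝ, ∀ t ∈ U, ⟪ξ t, d⟫_ℝ = C := by
  have key : ∀ t ∈ U, ⟪ξ t, d⟫_ℝ ^ 2 = ‖d‖ ^ 2 - c ^ 2 := by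
    intro t ht
    have hU : U ∈ nhds t := hUopen.mem_nhds ht
    have hβd : DifferentiableAt ℝ β t :=
      ((hβC1.differentiableOn one_ne_zero) t ht).differentiableAt hU
    have h1 : ∀ v, ⟪β t, fderiv ℝ β t v⟫_ℝ = 0 := by
      intro v
      have e : (fun s => ⟪β s, β s⟫_ℝ) =ᶠ[nhds t] fun _ => (1 : ℝ) := by
        filter_upwards [hU] with s hs
        rw [real_inner_self_eq_norm_sq, hβsph s hs, one_pow]
      have h := fderiv_inner_apply ℝ hβd hβd v
      rw [e.fderiv_eq] at h
      rw [real_inner_comm (β t) (fderiv ℝ β t v)] at h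
      simp at h
      linarith [real_inner_comm (β t) (fderiv ℝ β t v)]
    have h2 : ∀ v, ⟪d, fderiv ℝ β t v⟫_ℝ = 0 := by
      intro v
      have e : (fun s => ⟪β s, d⟫_ℝ) =ᶠ[nhds t] fun _ => c := by
        filter_upwards [hU] with s hs
        exact hsmall s hs
      have h := fderiv_inner_apply ℝ hβd (differentiableAt_const d) v
      rw [e.fderiv_eq] at h
      simp at h
      rw [real_inner_comm]
      linarith
    have hbb : ⟪β t, β t⟫_ℝ = 1 := by rw [real_inner_self_eq_norm_sq, hβsph t ht, one_pow]
    have hxx : ⟪ξ t, ξ t⟫_ℝ = 1 := by rw [real_inner_self_eq_norm_sq, hξunit t ht, one_pow]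
    have hxb := hξβ t ht
    have hbx : ⟪β t, ξ t⟫_ℝ = 0 := by rw [real_inner_comm]; exact hxb
    have hbd := hsmall t ht
    have hdb : ⟪d, β t⟫_ℝ = c := by rw [real_inner_comm]; exact hbd
    have hw := aux_zero _ (hβimm t ht) (β t) (ξ t) (d - c • β t - ⟪ξ t, d⟫_ℝ • ξ t)
      (hβsph t ht) (hξunit t ht) hxb (fun i => h1 _) (hξtang t ht)
      (fun i => by
        simp only [inner_sub_left, real_inner_smul_left, h1, h2, hξtang t ht i]; ring)
      (by simp only [inner_sub_left, real_inner_smul_left, hdb, hbb, hxb]; ring)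
      (by simp only [inner_sub_left, real_inner_smul_left, hbx, hxx,
            real_inner_comm (ξ t) d]; ring)
    have h3 : ⟪d - c • β t - ⟪ξ t, d⟫_ℝ • ξ t, d⟫_ℝ = 0 := by rw [hw, inner_zero_left]
    simp only [inner_sub_left, real_inner_smul_left, hbd, real_inner_self_eq_norm_sq] at h3
    linarith
  have hcont : ContinuousOn (fun t => ⟪ξ t, d⟫_ℝ) U := hξdiff.continuousOn.inner continuousOn_const
  obtain ⟨t0, ht0⟩ := hUconn.nonempty
  refine ⟨⟪ξ t0, d⟫_ℝ, fun t ht => ?_⟩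
  by_cases h0 : ⟪ξ t0, d⟫_ℝ = 0
  · have h := (key t ht).trans (key t0 ht0).symm
    rw [h0] at h ⊢
    simpa using h
  · exact hUconn.isPreconnected.eq_of_sq_eq hcont (continuousOn_const (c := ⟪ξ t0, d⟫_ℝ))
      (fun s hs => (key s hs).trans (key t0 ht0).symm) (fun _ => h0) ht0 rfl ht
end

section
/- Let α: I → ℝ^{m+2} (m ≥ 1) be a C² unit-speed curve on a nonempty open interval I ⊆ ℝ, p ∈ ℝ^{m+2}, d a unit vector, and c ∈ (−1, 1). Assume: (i) α(s) ≠ p and ⟨α(s) − p, d⟩ = c·‖α(s) − p‖ for all s ∈ I (α lies on the circular hypercone with vertex p and axis d); (ii) α''(s) ≠ 0 for all s; and (iii) for each s ∈ I the vector α''(s) is a scalar multiple of d − c·(α(s) − p)/‖α(s) − p‖ (α is a geodesic of the circular hypercone: its acceleration is parallel to the hypercone's normal). Then the function s ↦ ⟨α''(s), d⟩/‖α''(s)‖ is constant on I with absolute value √(1 − c²); in particular α is a slant helix with axis d. -/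
open scoped InnerProductSpace

/-- A geodesic of a circular hypercone in `ℝ^{m+2}` (vertex `p`, unit
axis `d`, opening cosine `c ∈ (−1,1)`): a unit-speed C² curve `α` on the cone
(`⟪α - p, d⟫ = c‖α - p‖`, `α ≠ p`) with nowhere-vanishing acceleration which is always a
scalar multiple of the cone normal direction `d − c·(α − p)/‖α − p‖`, is a slant helix
with axis `d`: `⟪α'', d⟫/‖α''‖` is constant of absolute value `√(1 − c²)`. -/
theorem circular_hypercone_geodesic_is_slant_helix
    (m : ℕ) (hm : 1 ≤ m)
    (I : Set ℝ) (hIopen : IsOpen I) (hIne : I.Nonempty) (hIconv : Convex ℝ I)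
    (α : ℝ → EuclideanSpace ℝ (Fin (m + 2))) (p : EuclideanSpace ℝ (Fin (m + 2)))
    (hC2 : ContDiffOn ℝ 2 α I)
    (hunit : ∀ s ∈ I, ‖deriv α s‖ = 1)
    (d : EuclideanSpace ℝ (Fin (m + 2))) (hd : ‖d‖ = 1)
    (c : ℝ) (hc : c ∈ Set.Ioo (-1 : ℝ) 1)
    (hne : ∀ s ∈ I, α s ≠ p)
    (hcone : ∀ s ∈ I, ⟪α s - p, d⟫_ℝ = c * ‖α s - p‖)
    (hacc : ∀ s ∈ I, deriv (deriv α) s ≠ 0)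
    (hgeo : ∀ s ∈ I, ∃ lam : ℝ,
      deriv (deriv α) s = lam • (d - (c / ‖α s - p‖) • (α s - p))) :
    ∃ C : ℝ, (∀ s ∈ I, ⟪deriv (deriv α) s, d⟫_ℝ / ‖deriv (deriv α) s‖ = C) ∧
      |C| = Real.sqrt (1 - c ^ 2) := by
  obtain ⟨hc1, hc2⟩ := hc
  have hpos : 0 < 1 - c ^ 2 := by nlinarith
  have hcont2 : ContinuousOn (deriv (deriv α)) I := by
    have h1 : ContDiffOn ℝ 1 (deriv α) I :=
      hC2.deriv_of_isOpen hIopen (by norm_num)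
    exact h1.continuousOn_deriv_of_isOpen hIopen le_rfl
  have hcont : ContinuousOn
      (fun s => ⟪deriv (deriv α) s, d⟫_ℝ / ‖deriv (deriv α) s‖) I :=
    (hcont2.inner continuousOn_const).div hcont2.norm
      (fun s hs => norm_ne_zero_iff.mpr (hacc s hs))
  have hsq : ∀ s ∈ I, (⟪deriv (deriv α) s, d⟫_ℝ / ‖deriv (deriv α) s‖) ^ 2 =
      (Real.sqrt (1 - c ^ 2)) ^ 2 := by
    intro s hs
    obtain ⟨lam, hl⟩ := hgeo s hs
    have hr : ‖α s - p‖ ≠ 0 := norm_ne_zero_iff.mpr (sub_ne_zero.mpr (hne s hs))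
    have hn := norm_ne_zero_iff.mpr (hacc s hs)
    have hdd : ⟪d, d⟫_ℝ = 1 := by rw [real_inner_self_eq_norm_sq, hd]; norm_num
    have hi : ⟪deriv (deriv α) s, d⟫_ℝ = lam * (1 - c ^ 2) := by
      rw [hl, real_inner_smul_left, inner_sub_left, real_inner_smul_left, hcone s hs, hdd]
      field_simp
    have hnn : ‖deriv (deriv α) s‖ ^ 2 = lam ^ 2 * (1 - c ^ 2) := by
      rw [hl, norm_smul, mul_pow, norm_sub_sq_real, norm_smul, real_inner_smul_right,
        real_inner_comm, hcone s hs, hd, mul_pow, Real.norm_eq_abs, Real.norm_eq_abs, sq_abs,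
        sq_abs]
      field_simp
      ring
    rw [Real.sq_sqrt hpos.le, div_pow, div_eq_iff (pow_ne_zero 2 hn), hi, hnn]
    ring
  rcases hIconv.isPreconnected.eq_or_eq_neg_of_sq_eq hcont
    (continuousOn_const (c := Real.sqrt (1 - c ^ 2))) (fun s hs => hsq s hs)
    (fun _ => (Real.sqrt_pos.mpr hpos).ne') with h | h
  · exact ⟨_, fun s hs => h hs, abs_of_nonneg (Real.sqrt_nonneg _)⟩
  · exact ⟨-Real.sqrt (1 - c ^ 2), fun s hs => h hs, by
      rw [abs_neg, abs_of_nonneg (Real.sqrt_nonneg _)]⟩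
end

section
/- Let α: I → ℝ^{m+2} (m ≥ 1) be a unit-speed curve on a nonempty open interval I ⊆ ℝ equipped with a twisted Frenet apparatus (N₀, …, N_{m+1}; κ₀, …, κ_m), let p ∈ ℝ^{m+2}, and let j ∈ {0, …, m}. Then α cannot be simultaneously j-rectifying and (j+1)-rectifying with vertex p: it is not the case that ⟨α(s) − p, N_j(s)⟩ = 0 and ⟨α(s) − p, N_{j+1}(s)⟩ = 0 for all s ∈ I. -/
open scoped InnerProductSpace

/-- A unit-speed curve in `ℝ^{m+2}` equipped with a *twisted* Frenet
apparatus `(N 0, …, N (m+1); κ 0, …, κ m)` cannot be simultaneously `j`- and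
`(j+1)`-rectifying with vertex `p` for any `0 ≤ j ≤ m`. -/
theorem not_j_and_j_succ_rectifying
    (m : ℕ) (hm : 1 ≤ m)
    (I : Set ℝ) (hIopen : IsOpen I) (hIne : I.Nonempty) (hIconv : Convex ℝ I)
    (α : ℝ → EuclideanSpace ℝ (Fin (m + 2)))
    (hαdiff : DifferentiableOn ℝ α I)
    (hunit : ∀ s ∈ I, ‖deriv α s‖ = 1)
    (N : ℕ → ℝ → EuclideanSpace ℝ (Fin (m + 2))) (κ : ℕ → ℝ → ℝ)
    (hNC1 : ∀ i ≤ m + 1, ContDiffOn ℝ 1 (N i) I)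
    (hON : ∀ s ∈ I, ∀ i ≤ m + 1, ∀ j ≤ m + 1,
      ⟪N i s, N j s⟫_ℝ = if i = j then (1 : ℝ) else 0)
    (hN0 : ∀ s ∈ I, N 0 s = deriv α s)
    (hκcont : ∀ i ≤ m, ContinuousOn (κ i) I)
    (hF0 : ∀ s ∈ I, deriv (N 0) s = κ 0 s • N 1 s)
    (hFi : ∀ i, 1 ≤ i → i ≤ m → ∀ s ∈ I,
      deriv (N i) s = (-(κ (i - 1) s)) • N (i - 1) s + κ i s • N (i + 1) s)
    (hFlast : ∀ s ∈ I, deriv (N (m + 1)) s = (-(κ m s)) • N m s)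
    (htwist : ∀ i ≤ m, ∀ s ∈ I, κ i s ≠ 0)
    (p : EuclideanSpace ℝ (Fin (m + 2))) (j : ℕ) (hj : j ≤ m) :
    ¬ (∀ s ∈ I, ⟪α s - p, N j s⟫_ℝ = 0 ∧ ⟪α s - p, N (j + 1) s⟫_ℝ = 0) := by
  have key : ∀ i ≤ m, (∀ s ∈ I, ⟪α s - p, N i s⟫_ℝ = 0) → ∀ s ∈ I,
      ⟪α s - p, deriv (N i) s⟫_ℝ + ⟪N 0 s, N i s⟫_ℝ = 0 := by
    intro i hi h s hs
    have hnhds := hIopen.mem_nhds hs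
    have h1 : HasDerivAt (fun t => α t - p) (deriv α s) s :=
      ((hαdiff.differentiableAt hnhds).hasDerivAt).sub_const p
    have h2 : HasDerivAt (N i) (deriv (N i) s) s :=
      (((hNC1 i (by omega)).differentiableOn (by norm_num)).differentiableAt hnhds).hasDerivAt
    have h3 := h1.inner ℝ h2
    have h4 : (fun t => ⟪α t - p, N i t⟫_ℝ) =ᶠ[nhds s] fun _ => (0 : ℝ) := by
      filter_upwards [hnhds] with t ht using h t ht
    have h5 := h3.unique ((hasDerivAt_const s (0 : ℝ)).congr_of_eventuallyEq h4)
    rw [hN0 s hs]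
    exact h5
  induction j with
  | zero =>
    intro h
    obtain ⟨s, hs⟩ := hIne
    have h1 := key 0 (by omega) (fun s hs => (h s hs).1) s hs
    rw [hF0 s hs, inner_smul_right, (h s hs).2, hON s hs 0 (by omega) 0 (by omega)] at h1
    simp at h1
  | succ k ih =>
    intro h
    refine ih (by omega) fun s hs => ⟨?_, (h s hs).1⟩
    have h1 := key (k + 1) hj (fun s hs => (h s hs).1) s hs
    rw [hFi (k + 1) (by omega) hj s hs, inner_add_right, inner_smul_right, inner_smul_right,
      (h s hs).2, hON s hs 0 (by omega) (k + 1) (by omega)] at h1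
    simpa [htwist k (by omega) s hs] using h1
end

section
/- Let α: I → ℝ^{m+2} (m ≥ 1) be a unit-speed curve on a nonempty open interval I ⊆ ℝ equipped with a Frenet apparatus (N₀, …, N_{m+1}; κ₀, …, κ_m), let p ∈ ℝ^{m+2}, and let j ∈ {0, …, m}. If α is j-rectifying with vertex p (i.e. Aⱼ ≡ 0, where Aᵢ = ⟨α − p, Nᵢ⟩), then the normal vector field α^{Nⱼ} = Σ_{i=j+1}^{m+1} Aᵢ·Nᵢ has constant length: the function s ↦ Σ_{i=j+1}^{m+1} Aᵢ(s)² is constant on I. -/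
open scoped InnerProductSpace

/-- If a unit-speed curve in `ℝ^{m+2}` with a Frenet apparatus is
`j`-rectifying with vertex `p` (`⟪α - p, N j⟫ ≡ 0`, `0 ≤ j ≤ m`), then the normal vector
field `α^{N_j} = Σ_{i=j+1}^{m+1} A i • N i` has constant length:
`Σ_{i=j+1}^{m+1} (A i)²` is constant on `I`, where `A i = ⟪α - p, N i⟫`. -/
theorem j_rectifying_normal_component_const
    (m : ℕ) (hm : 1 ≤ m)
    (I : Set ℝ) (hIopen : IsOpen I) (hIne : I.Nonempty) (hIconv : Convex ℝ I)
    (α : ℝ → EuclideanSpace ℝ (Fin (m + 2)))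
    (hαdiff : DifferentiableOn ℝ α I)
    (hunit : ∀ s ∈ I, ‖deriv α s‖ = 1)
    (N : ℕ → ℝ → EuclideanSpace ℝ (Fin (m + 2))) (κ : ℕ → ℝ → ℝ)
    (hNC1 : ∀ i ≤ m + 1, ContDiffOn ℝ 1 (N i) I)
    (hON : ∀ s ∈ I, ∀ i ≤ m + 1, ∀ j ≤ m + 1,
      ⟪N i s, N j s⟫_ℝ = if i = j then (1 : ℝ) else 0)
    (hN0 : ∀ s ∈ I, N 0 s = deriv α s)
    (hκcont : ∀ i ≤ m, ContinuousOn (κ i) I)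
    (hF0 : ∀ s ∈ I, deriv (N 0) s = κ 0 s • N 1 s)
    (hFi : ∀ i, 1 ≤ i → i ≤ m → ∀ s ∈ I,
      deriv (N i) s = (-(κ (i - 1) s)) • N (i - 1) s + κ i s • N (i + 1) s)
    (hFlast : ∀ s ∈ I, deriv (N (m + 1)) s = (-(κ m s)) • N m s)
    (p : EuclideanSpace ℝ (Fin (m + 2))) (j : ℕ) (hj : j ≤ m)
    (hrect : ∀ s ∈ I, ⟪α s - p, N j s⟫_ℝ = 0) :
    ∃ C : ℝ, ∀ s ∈ I,
      ∑ i ∈ Finset.Icc (j + 1) (m + 1), (⟪α s - p, N i s⟫_ℝ) ^ 2 = C := by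
  classical
  obtain ⟨s₀, hs₀⟩ := hIne
  set A : ℕ → ℝ → ℝ := fun i s => ⟪α s - p, N i s⟫_ℝ with hA
  set g : ℕ → ℝ → ℝ := fun i s => if i ≤ m then κ i s * A i s * A (i + 1) s else 0 with hg
  have hd : ∀ s ∈ I, ∀ i, i + 1 ≤ m + 1 →
      HasDerivAt (fun t => (A (i + 1) t) ^ 2) (2 * (g (i + 1) s - g i s)) s := by
    intro s hs i hi
    have hnhds := hIopen.mem_nhds hs
    have h1 : HasDerivAt (fun t => α t - p) (deriv α s) s :=
      ((hαdiff.differentiableAt hnhds).hasDerivAt).sub_const p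
    have h2 : HasDerivAt (N (i + 1)) (deriv (N (i + 1)) s) s :=
      ((((hNC1 (i + 1) hi).differentiableOn one_ne_zero)).differentiableAt hnhds).hasDerivAt
    have h3 : HasDerivAt (fun t => A (i + 1) t)
        (⟪α s - p, deriv (N (i + 1)) s⟫_ℝ + ⟪deriv α s, N (i + 1) s⟫_ℝ) s :=
      HasDerivAt.inner ℝ h1 h2
    have h0 : ⟪deriv α s, N (i + 1) s⟫_ℝ = 0 := by
      rw [← hN0 s hs, hON s hs 0 (by omega) (i + 1) hi]
      simp
    have h4 := h3.pow 2
    refine h4.congr_deriv ?_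
    rw [h0]
    have him : i ≤ m := by omega
    by_cases hlt : i + 1 ≤ m
    · rw [hFi (i + 1) (by omega) hlt s hs]
      simp only [hg, hA, if_pos hlt, if_pos him, inner_add_right, inner_smul_right,
        Nat.add_sub_cancel]
      push_cast
      ring
    · have : i = m := by omega
      subst this
      rw [hFlast s hs]
      simp only [hg, hA, if_neg hlt, if_pos him, inner_smul_right]
      push_cast
      ring
  have hsum : ∀ s ∈ I, ∀ n, j ≤ n → n ≤ m + 1 →
      HasDerivAt (fun t => ∑ i ∈ Finset.Icc (j + 1) n, (A i t) ^ 2)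
        (2 * (g n s - g j s)) s := by
    intro s hs n hn
    induction n, hn using Nat.le_induction with
    | base => intro _; simpa using hasDerivAt_const s (0 : ℝ)
    | succ n hn ih =>
      intro hn1
      simp only [Finset.sum_Icc_succ_top (show j + 1 ≤ n + 1 by omega)]
      refine ((ih (by omega)).add (hd s hs n hn1)).congr_deriv ?_
      ring
  have hder : ∀ s ∈ I,
      HasDerivAt (fun t => ∑ i ∈ Finset.Icc (j + 1) (m + 1), (A i t) ^ 2) 0 s := by
    intro s hs
    refine (hsum s hs (m + 1) (by omega) le_rfl).congr_deriv ?_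
    have : A j s = 0 := hrect s hs
    simp [hg, this]
  refine ⟨∑ i ∈ Finset.Icc (j + 1) (m + 1), (A i s₀) ^ 2, fun s hs => ?_⟩
  exact hIopen.is_const_of_deriv_eq_zero hIconv.isPreconnected
    (fun t ht => (hder t ht).differentiableAt.differentiableWithinAt)
    (fun t ht => (hder t ht).deriv) hs hs₀
end

section
/- Let α: I → ℝ^{m+2} (m ≥ 1) be a unit-speed curve on a nonempty open interval I ⊆ ℝ equipped with a Frenet apparatus (N₀, …, N_{m+1}; κ₀, …, κ_m), let p ∈ ℝ^{m+2}, and let j ∈ {0, …, m}. Assume κⱼ(s) ≠ 0 for all s ∈ I (which holds in particular when α is twisted) and that A_{j+1}(s) ≠ 0 for all s ∈ I, where Aᵢ = ⟨α − p, Nᵢ⟩. If the function s ↦ Σ_{i=j+1}^{m+1} Aᵢ(s)² is constant on I (the normal vector field α^{Nⱼ} = Σ_{i=j+1}^{m+1} Aᵢ·Nᵢ has constant length), then α is j-rectifying with vertex p: Aⱼ(s) = 0 for all s ∈ I. -/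
open scoped InnerProductSpace

/-- Converse of Statement 15: if `κ j` never vanishes on `I`,
`A (j+1) = ⟪α - p, N (j+1)⟫` never vanishes on `I`, and
`Σ_{i=j+1}^{m+1} (A i)²` is constant on `I`, then the unit-speed Frenet curve `α` is
`j`-rectifying with vertex `p`: `⟪α - p, N j⟫ ≡ 0` on `I`. -/
theorem j_rectifying_of_normal_component_const
    (m : ℕ) (hm : 1 ≤ m)
    (I : Set ℝ) (hIopen : IsOpen I) (hIne : I.Nonempty) (hIconv : Convex ℝ I)
    (α : ℝ → EuclideanSpace ℝ (Fin (m + 2)))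
    (hαdiff : DifferentiableOn ℝ α I)
    (hunit : ∀ s ∈ I, ‖deriv α s‖ = 1)
    (N : ℕ → ℝ → EuclideanSpace ℝ (Fin (m + 2))) (κ : ℕ → ℝ → ℝ)
    (hNC1 : ∀ i ≤ m + 1, ContDiffOn ℝ 1 (N i) I)
    (hON : ∀ s ∈ I, ∀ i ≤ m + 1, ∀ j ≤ m + 1,
      ⟪N i s, N j s⟫_ℝ = if i = j then (1 : ℝ) else 0)
    (hN0 : ∀ s ∈ I, N 0 s = deriv α s)
    (hκcont : ∀ i ≤ m, ContinuousOn (κ i) I)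
    (hF0 : ∀ s ∈ I, deriv (N 0) s = κ 0 s • N 1 s)
    (hFi : ∀ i, 1 ≤ i → i ≤ m → ∀ s ∈ I,
      deriv (N i) s = (-(κ (i - 1) s)) • N (i - 1) s + κ i s • N (i + 1) s)
    (hFlast : ∀ s ∈ I, deriv (N (m + 1)) s = (-(κ m s)) • N m s)
    (p : EuclideanSpace ℝ (Fin (m + 2))) (j : ℕ) (hj : j ≤ m)
    (hκj : ∀ s ∈ I, κ j s ≠ 0)
    (hAj1 : ∀ s ∈ I, ⟪α s - p, N (j + 1) s⟫_ℝ ≠ 0)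
    (hconst : ∃ C : ℝ, ∀ s ∈ I,
      ∑ i ∈ Finset.Icc (j + 1) (m + 1), (⟪α s - p, N i s⟫_ℝ) ^ 2 = C) :
    ∀ s ∈ I, ⟪α s - p, N j s⟫_ℝ = 0 := by
  intro s hs
  obtain ⟨C, hC⟩ := hconst
  have hnhds : I ∈ nhds s := hIopen.mem_nhds hs
  have hα : HasDerivAt α (N 0 s) s := by
    rw [hN0 s hs]
    exact (hαdiff.differentiableAt hnhds).hasDerivAt
  have hN : ∀ i ≤ m + 1, HasDerivAt (N i) (deriv (N i) s) s := fun i hi =>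
    (((hNC1 i hi).differentiableOn (by norm_num)).differentiableAt hnhds).hasDerivAt
  let F : ℕ → ℝ := fun i =>
    if i ≤ m then κ i s * ⟪α s - p, N i s⟫_ℝ * ⟪α s - p, N (i + 1) s⟫_ℝ else 0
  have hA : ∀ i, 1 ≤ i → i ≤ m + 1 →
      HasDerivAt (fun t => (⟪α t - p, N i t⟫_ℝ) ^ 2) (2 * (F i - F (i - 1))) s := by
    intro i h1 h2
    have h := ((hα.sub_const p).inner ℝ (hN i h2)).pow 2
    have h0 : ⟪N 0 s, N i s⟫_ℝ = 0 := by
      rw [hON s hs 0 (by omega) i h2, if_neg (by omega)]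
    refine h.congr_deriv ?_
    obtain ⟨k, rfl⟩ : ∃ k, i = k + 1 := ⟨i - 1, by omega⟩
    have hk : k ≤ m := by omega
    rcases Nat.lt_or_ge m (k + 1) with hlt | hle
    · obtain rfl : k = m := by omega
      simp only [F, hFlast s hs, inner_smul_right, h0]
      simp
      ring
    · simp only [F, hFi (k + 1) h1 hle s hs, inner_add_right, inner_smul_right, h0]
      simp [hk, hle]
      ring
  have hsum : HasDerivAt
      (fun t => ∑ i ∈ Finset.Icc (j + 1) (m + 1), (⟪α t - p, N i t⟫_ℝ) ^ 2)
      (∑ i ∈ Finset.Icc (j + 1) (m + 1), 2 * (F i - F (i - 1))) s := by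
    apply HasDerivAt.fun_sum
    intro i hi
    rw [Finset.mem_Icc] at hi
    exact hA i (by omega) hi.2
  have hzero : HasDerivAt
      (fun t => ∑ i ∈ Finset.Icc (j + 1) (m + 1), (⟪α t - p, N i t⟫_ℝ) ^ 2) 0 s := by
    refine (hasDerivAt_const s C).congr_of_eventuallyEq ?_
    filter_upwards [hnhds] with t ht using hC t ht
  have htel : ∀ n, j ≤ n →
      ∑ i ∈ Finset.Icc (j + 1) n, 2 * (F i - F (i - 1)) = 2 * (F n - F j) := by
    intro n hn
    induction n, hn using Nat.le_induction with
    | base => simp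
    | succ n hn ih =>
      rw [Finset.sum_Icc_succ_top (by omega), ih, Nat.add_sub_cancel]
      ring
  have heq := hsum.unique hzero
  rw [htel (m + 1) (by omega)] at heq
  simp only [F, hj, if_true, if_neg (show ¬ (m + 1 ≤ m) by omega)] at heq
  have h3 : κ j s * ⟪α s - p, N j s⟫_ℝ * ⟪α s - p, N (j + 1) s⟫_ℝ = 0 := by linarith
  rcases mul_eq_zero.mp h3 with h | h
  · exact (mul_eq_zero.mp h).resolve_left (hκj s hs)
  · exact absurd h (hAj1 s hs)
end

section
/- Let α: I → ℝⁿ be a real-analytic unit-speed curve on a nonempty open interval I ⊆ ℝ, p ∈ ℝⁿ, and let V: I → ℝⁿ be a real-analytic vector field with ‖V(s)‖ = 1, ⟨V(s), α'(s)⟩ = 0, and V'(s) a scalar multiple of α'(s) for every s ∈ I (V is a rotation minimizing normal field). If ⟨α(s) − p, V(s)⟩ = 0 for all s ∈ I (α is normal with respect to V), then either α lies in a hyperplane (there exist d ≠ 0 and c ∈ ℝ with ⟨α(s), d⟩ = c for all s ∈ I) or α lies on a sphere (there exist q ∈ ℝⁿ and R > 0 with ‖α(s) − q‖ = R for all s ∈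 I). -/
open scoped InnerProductSpace

/-- If a real-analytic unit-speed curve `α : I → ℝⁿ` is normal with
respect to a real-analytic rotation minimizing normal field `V` (unit, `⟪V, α'⟫ = 0`,
`V'` everywhere a scalar multiple of `α'`, and `⟪α - p, V⟫ ≡ 0`), then `α` lies in a
hyperplane or on a sphere. -/
theorem normal_wrt_RM_field_is_plane_or_sphere
    {n : ℕ} (hn : 3 ≤ n)
    (I : Set ℝ) (hIopen : IsOpen I) (hIne : I.Nonempty) (hIconv : Convex ℝ I)
    (α V : ℝ → EuclideanSpace ℝ (Fin n)) (p : EuclideanSpace ℝ (Fin n))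
    (hαan : AnalyticOnNhd ℝ α I)
    (hunit : ∀ s ∈ I, ‖deriv α s‖ = 1)
    (hVan : AnalyticOnNhd ℝ V I)
    (hVunit : ∀ s ∈ I, ‖V s‖ = 1)
    (hVnormal : ∀ s ∈ I, ⟪V s, deriv α s⟫_ℝ = 0)
    (hRM : ∀ s ∈ I, ∃ lam : ℝ, deriv V s = lam • deriv α s)
    (hnormal : ∀ s ∈ I, ⟪α s - p, V s⟫_ℝ = 0) :
    (∃ d : EuclideanSpace ℝ (Fin n), d ≠ 0 ∧ ∃ c : ℝ, ∀ s ∈ I, ⟪α s, d⟫_ℝ = c) ∨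
    (∃ q : EuclideanSpace ℝ (Fin n), ∃ R : ℝ, 0 < R ∧ ∀ s ∈ I, ‖α s - q‖ = R) := by
  have hpre : IsPreconnected I := hIconv.isPreconnected
  obtain ⟨s₀, hs₀⟩ := hIne
  have inn : ∀ F G : ℝ → EuclideanSpace ℝ (Fin n), AnalyticOnNhd ℝ F I →
      AnalyticOnNhd ℝ G I → AnalyticOnNhd ℝ (fun s => ⟪F s, G s⟫_ℝ) I := by
    intro F G hF hG s hs
    have h := (ContinuousLinearMap.analyticAt_bilinear
      (innerSL ℝ (E := EuclideanSpace ℝ (Fin n))) (F s, G s)).comp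
      (f := fun s => (F s, G s)) ((hF s hs).prod (hG s hs))
    exact h
  have hα' : ∀ s ∈ I, HasDerivAt (fun s => α s - p) (deriv α s) s := fun s hs =>
    (hαan s hs).differentiableAt.hasDerivAt.sub_const p
  have hV' : ∀ s ∈ I, HasDerivAt V (deriv V s) s := fun s hs =>
    (hVan s hs).differentiableAt.hasDerivAt
  have hf : AnalyticOnNhd ℝ (fun s => ⟪α s - p, deriv α s⟫_ℝ) I :=
    inn _ _ (hαan.sub analyticOnNhd_const) hαan.deriv
  have hg : AnalyticOnNhd ℝ (fun s => ⟪deriv V s, deriv α s⟫_ℝ) I :=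
    inn _ _ hVan.deriv hαan.deriv
  have hlam : ∀ s ∈ I, deriv V s = ⟪deriv V s, deriv α s⟫_ℝ • deriv α s := by
    intro s hs
    obtain ⟨l, hl⟩ := hRM s hs
    rw [hl, real_inner_smul_left, real_inner_self_eq_norm_sq, hunit s hs]
    simp
  have hprod : ∀ s ∈ I, ⟪α s - p, deriv α s⟫_ℝ * ⟪deriv V s, deriv α s⟫_ℝ = 0 := by
    intro s hs
    have h1 := (hα' s hs).inner ℝ (hV' s hs)
    have h2 : HasDerivAt (fun s => ⟪α s - p, V s⟫_ℝ) 0 s := by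
      refine (hasDerivAt_const s (0:ℝ)).congr_of_eventuallyEq ?_
      filter_upwards [hIopen.mem_nhds hs] with t ht using hnormal t ht
    have h3 := h1.unique h2
    rw [real_inner_comm (V s) (deriv α s), hVnormal s hs, add_zero, hlam s hs, real_inner_smul_right] at h3
    linarith
  rcases AnalyticOnNhd.eq_zero_or_eq_zero_of_mul_eq_zero hf hg hprod hpre with h | h
  · right
    have hc : ∀ s ∈ I, ⟪α s - p, α s - p⟫_ℝ = ⟪α s₀ - p, α s₀ - p⟫_ℝ := by
      have hd : ∀ s ∈ I, HasDerivAt (fun s => ⟪α s - p, α s - p⟫_ℝ) 0 s := by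
        intro s hs
        have h1 := (hα' s hs).inner ℝ (hα' s hs)
        have h2 : ⟪α s - p, deriv α s⟫_ℝ = 0 := h s hs
        rwa [real_inner_comm (α s - p) (deriv α s), h2, add_zero] at h1
      intro s hs
      exact hIopen.is_const_of_deriv_eq_zero hpre
        (fun t ht => (hd t ht).differentiableAt.differentiableWithinAt)
        (fun t ht => (hd t ht).deriv) hs hs₀
    have hc' : ∀ s ∈ I, ‖α s - p‖ = ‖α s₀ - p‖ := by
      intro s hs
      have := hc s hs
      rw [real_inner_self_eq_norm_sq, real_inner_self_eq_norm_sq] at this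
      exact (sq_eq_sq₀ (norm_nonneg _) (norm_nonneg _)).1 this
    refine ⟨p, ‖α s₀ - p‖, ?_, hc'⟩
    refine (norm_nonneg _).lt_of_ne' fun h0 => ?_
    have h2 : HasDerivAt (fun s => α s - p) 0 s₀ := by
      refine (hasDerivAt_const s₀ (0 : EuclideanSpace ℝ (Fin n))).congr_of_eventuallyEq ?_
      filter_upwards [hIopen.mem_nhds hs₀] with t ht
      exact norm_eq_zero.1 ((hc' t ht).trans h0)
    have h3 := (hα' s₀ hs₀).unique h2
    have h4 := hunit s₀ hs₀
    rw [h3, norm_zero] at h4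
    exact zero_ne_one h4
  · left
    have hVc : ∀ s ∈ I, V s = V s₀ := by
      intro s hs
      refine hIopen.is_const_of_deriv_eq_zero hpre
        (fun t ht => (hV' t ht).differentiableAt.differentiableWithinAt)
        (fun t ht => ?_) hs hs₀
      have h2 : ⟪deriv V t, deriv α t⟫_ℝ = 0 := h t ht
      rw [hlam t ht, h2, zero_smul]; rfl
    refine ⟨V s₀, fun h0 => ?_, ⟪p, V s₀⟫_ℝ, fun s hs => ?_⟩
    · have := hVunit s₀ hs₀
      rw [h0, norm_zero] at this
      exact zero_ne_one this
    · have := hnormal s hs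
      rw [hVc s hs, inner_sub_left] at this
      linarith
end

section
/- Let α: I → ℝⁿ (n ≥ 3) be a C² unit-speed curve on a nonempty open interval I ⊆ ℝ. Suppose α lies in a hyperplane (there exist d ≠ 0 and c ∈ ℝ with ⟨α(s), d⟩ = c for all s ∈ I) or α lies on a sphere (there exist q ∈ ℝⁿ and R > 0 with ‖α(s) − q‖ = R for all s ∈ I). Then there exist a point p ∈ ℝⁿ and a C¹ vector field V: I → ℝⁿ with ‖V(s)‖ = 1, ⟨V(s), α'(s)⟩ = 0, V'(s) a scalar multiple of α'(s) for every s ∈ I (V is rotation minimizing), and ⟨α(s) − p, V(s)⟩ = 0 for all s ∈ I (α is normal with respect to the RM field V). -/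
open scoped InnerProductSpace

section helpers

variable {E : Type*} [NormedAddCommGroup E] [InnerProductSpace ℝ E]

lemma aux_const (J : Set ℝ) (hJ : IsOpen J) (hJc : Convex ℝ J) (f : ℝ → ℝ)
    (hf : ∀ t ∈ J, HasDerivAt f 0 t) {x y : ℝ} (hx : x ∈ J) (hy : y ∈ J) : f x = f y := by
  refine hJ.is_const_of_deriv_eq_zero hJc.isPreconnected
    (fun t ht => (hf t ht).differentiableAt.differentiableWithinAt) (fun t ht => ?_) hx hy
  simpa using (hf t ht).deriv

lemma aux_normal (J : Set ℝ) (hJ : IsOpen J) (hJc : Convex ℝ J) (T A W : ℝ → E)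
    (hT : ∀ t ∈ J, HasDerivAt T (A t) t) (hT1 : ∀ t ∈ J, ‖T t‖ = 1)
    (hW : ∀ t ∈ J, HasDerivAt W (-(⟪W t, A t⟫_ℝ • T t)) t)
    {t₀ : ℝ} (h0 : t₀ ∈ J) (hn : ⟪W t₀, T t₀⟫_ℝ = 0) :
    (∀ t ∈ J, ⟪W t, T t⟫_ℝ = 0) ∧ (∀ t ∈ J, ‖W t‖ = ‖W t₀‖) := by
  have h1 : ∀ t ∈ J, ⟪W t, T t⟫_ℝ = 0 := by
    intro t ht
    rw [← hn]
    refine aux_const J hJ hJc (fun t => ⟪W t, T t⟫_ℝ) (fun s hs => ?_) ht h0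
    have := (hW s hs).inner ℝ (hT s hs)
    refine this.congr_deriv ?_
    simp [inner_neg_left, real_inner_smul_left, real_inner_self_eq_norm_sq, hT1 s hs]
  refine ⟨h1, fun t ht => ?_⟩
  have h2 : ⟪W t, W t⟫_ℝ = ⟪W t₀, W t₀⟫_ℝ := by
    refine aux_const J hJ hJc (fun t => ⟪W t, W t⟫_ℝ) (fun s hs => ?_) ht h0
    have := (hW s hs).inner ℝ (hW s hs)
    refine this.congr_deriv ?_
    simp [inner_neg_left, inner_neg_right, real_inner_smul_left, real_inner_smul_right, h1 s hs,
      real_inner_comm (W s) (T s)]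
  rw [real_inner_self_eq_norm_sq, real_inner_self_eq_norm_sq] at h2
  exact (sq_eq_sq₀ (norm_nonneg _) (norm_nonneg _)).1 h2

lemma aux_bound {a b t₀ K : ℝ} (h0 : t₀ ∈ Set.Ioo a b) (hK : 0 ≤ K) (V V' : ℝ → E)
    (hV : ∀ t ∈ Set.Ioo a b, HasDerivAt V (V' t) t)
    (hV' : ∀ t ∈ Set.Ioo a b, ‖V' t‖ ≤ K * ‖V t‖) :
    ∀ t ∈ Set.Ioo a b, ‖V t‖ ≤ ‖V t₀‖ * Real.exp (K * (b - a)) := by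
  have key : ∀ c : ℝ, ∀ t ∈ Set.Ioo a b,
      HasDerivAt (fun t => ⟪V t, V t⟫_ℝ * Real.exp (c * t))
      ((2 * ⟪V t, V' t⟫_ℝ + c * ‖V t‖ ^ 2) * Real.exp (c * t)) t := by
    intro c t ht
    have h1 := (hV t ht).inner ℝ (hV t ht)
    have h2 : HasDerivAt (fun t => Real.exp (c * t)) (Real.exp (c * t) * c) t := by
      simpa using ((hasDerivAt_id t).const_mul c).exp
    refine (h1.mul h2).congr_deriv ?_
    rw [real_inner_comm (V t) (V' t), real_inner_self_eq_norm_sq]; ring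
  have hin : ∀ t ∈ Set.Ioo a b, |⟪V t, V' t⟫_ℝ| ≤ K * ‖V t‖ ^ 2 := by
    intro t ht
    calc _ ≤ ‖V t‖ * ‖V' t‖ := abs_real_inner_le_norm _ _
      _ ≤ ‖V t‖ * (K * ‖V t‖) := by gcongr; exact hV' t ht
      _ = _ := by ring
  have anti : AntitoneOn (fun t => ⟪V t, V t⟫_ℝ * Real.exp ((-(2 * K)) * t)) (Set.Ioo a b) := by
    refine antitoneOn_of_deriv_nonpos (convex_Ioo a b)
      (fun t ht => (key _ t ht).continuousAt.continuousWithinAt) ?_ ?_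
    · intro t ht
      rw [interior_Ioo] at ht
      exact (key _ t ht).differentiableAt.differentiableWithinAt
    · intro t ht
      rw [interior_Ioo] at ht
      rw [(key _ t ht).deriv]
      refine mul_nonpos_of_nonpos_of_nonneg ?_ (Real.exp_pos _).le
      have := (abs_le.1 (hin t ht)).2
      linarith
  have mono : MonotoneOn (fun t => ⟪V t, V t⟫_ℝ * Real.exp ((2 * K) * t)) (Set.Ioo a b) := by
    refine monotoneOn_of_deriv_nonneg (convex_Ioo a b)
      (fun t ht => (key _ t ht).continuousAt.continuousWithinAt) ?_ ?_
    · intro t ht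
      rw [interior_Ioo] at ht
      exact (key _ t ht).differentiableAt.differentiableWithinAt
    · intro t ht
      rw [interior_Ioo] at ht
      rw [(key _ t ht).deriv]
      refine mul_nonneg ?_ (Real.exp_pos _).le
      have := (abs_le.1 (hin t ht)).1
      linarith
  intro t ht
  -- common finish
  have fin : ∀ c : ℝ, ‖V t‖ ^ 2 * Real.exp (c * t) ≤ ‖V t₀‖ ^ 2 * Real.exp (c * t₀) →
      c * (t₀ - t) ≤ 2 * (K * (b - a)) → ‖V t‖ ≤ ‖V t₀‖ * Real.exp (K * (b - a)) := by
    intro c h hc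
    refine (sq_le_sq₀ (norm_nonneg _) (by positivity)).1 ?_
    have e1 : ‖V t‖ ^ 2 = ‖V t‖ ^ 2 * Real.exp (c * t) * Real.exp (-(c * t)) := by
      rw [mul_assoc, ← Real.exp_add]; simp
    rw [e1]
    calc _ ≤ ‖V t₀‖ ^ 2 * Real.exp (c * t₀) * Real.exp (-(c * t)) := by gcongr
      _ = ‖V t₀‖ ^ 2 * Real.exp (c * (t₀ - t)) := by
        rw [mul_assoc, ← Real.exp_add]; ring_nf
      _ ≤ ‖V t₀‖ ^ 2 * Real.exp (2 * (K * (b - a))) := by gcongr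
      _ = _ := by rw [mul_pow, ← Real.exp_nat_mul]; norm_num
  rcases le_total t₀ t with h | h
  · have := anti h0 ht h
    simp only [real_inner_self_eq_norm_sq] at this
    refine fin _ this ?_
    have : K * (t - t₀) ≤ K * (b - a) := by
      apply mul_le_mul_of_nonneg_left _ hK; linarith [ht.1, ht.2, h0.1, h0.2]
    linarith
  · have := mono ht h0 h
    simp only [real_inner_self_eq_norm_sq] at this
    refine fin _ this ?_
    have : K * (t₀ - t) ≤ K * (b - a) := by
      apply mul_le_mul_of_nonneg_left _ hK; linarith [ht.1, ht.2, h0.1, h0.2]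
    linarith

lemma aux_clamp_lip (M x y : ℝ) :
    |max (-M) (min M x) - max (-M) (min M y)| ≤ |x - y| := by
  refine (abs_max_sub_max_le_max _ _ _ _).trans ?_
  refine max_le (by simp) ((abs_min_sub_min_le_max _ _ _ _).trans ?_)
  exact max_le (by simp) le_rfl

lemma aux_exists [CompleteSpace E] {a b t₀ : ℝ} (h0 : t₀ ∈ Set.Ioo a b) (T A : ℝ → E)
    (hTc : ContinuousOn T (Set.Icc a b)) (hAc : ContinuousOn A (Set.Icc a b))
    (hT1 : ∀ t ∈ Set.Icc a b, ‖T t‖ = 1) (v₀ : E) :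
    ∃ V : ℝ → E, V t₀ = v₀ ∧
      ∀ t ∈ Set.Ioo a b, HasDerivAt V (-(⟪V t, A t⟫_ℝ • T t)) t := by
  obtain ⟨K₀, hK₀⟩ := isCompact_Icc.exists_bound_of_continuousOn hAc
  obtain ⟨K, hKK⟩ : ∃ K : NNReal, ∀ t ∈ Set.Icc a b, ‖A t‖ ≤ K :=
    ⟨Real.toNNReal K₀, fun t ht => (hK₀ t ht).trans (Real.le_coe_toNNReal _)⟩
  obtain ⟨M, hM⟩ : ∃ M : NNReal, (M : ℝ) = ‖v₀‖ * Real.exp (K * (b - a)) * K :=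
    ⟨⟨_, by positivity⟩, rfl⟩
  set φ : ℝ → ℝ := fun x => max (-(M : ℝ)) (min M x) with hφ
  have hφM : ∀ x, |φ x| ≤ M := fun x => abs_le.2 ⟨le_max_left _ _,
    max_le (by linarith [M.2]) (min_le_left _ _)⟩
  have hφx : ∀ x, |φ x| ≤ |x| := fun x => by
    have := aux_clamp_lip M x 0
    simpa using this
  have hφe : ∀ x : ℝ, |x| ≤ (M : ℝ) → φ x = x := fun x hx => by
    have := abs_le.1 hx
    simp [hφ, this.1, this.2]
  have hφc : Continuous φ := by fun_prop
  let f : ℝ → E → E := fun t v => -(φ ⟪v, A t⟫_ℝ • T t)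
  let t0' : Set.Icc a b := ⟨t₀, h0.1.le, h0.2.le⟩
  obtain ⟨L, hL⟩ : ∃ L : NNReal, (L : ℝ) = M * max (b - t₀) (t₀ - a) :=
    ⟨⟨_, mul_nonneg M.2 (le_max_of_le_left (by linarith [h0.2]))⟩, rfl⟩
  have hPL : IsPicardLindelof f t0' v₀ L 0 M K := by
    refine ⟨fun t ht => ?_, fun x _ => ?_, fun t ht x _ => ?_, ?_⟩
    · refine LipschitzOnWith.of_dist_le_mul fun x _ y _ => ?_
      rw [dist_eq_norm, dist_eq_norm]
      have : f t x - f t y = (φ ⟪y, A t⟫_ℝ - φ ⟪x, A t⟫_ℝ) • T t := by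
        simp only [f, sub_smul]; abel
      rw [this, norm_smul, hT1 t ht, mul_one, Real.norm_eq_abs]
      refine (aux_clamp_lip _ _ _).trans ?_
      rw [← inner_sub_left]
      refine (abs_real_inner_le_norm _ _).trans ?_
      rw [norm_sub_rev, mul_comm]
      gcongr
      exact hKK t ht
    · exact ((hφc.comp_continuousOn (continuousOn_const.inner hAc)).smul hTc).neg
    · simp only [f, norm_neg, norm_smul, hT1 t ht, mul_one, Real.norm_eq_abs]
      exact hφM _
    · simp [hL, t0']
  obtain ⟨V, hV0, hV⟩ := hPL.exists_eq_forall_mem_Icc_hasDerivWithinAt₀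
  have hV' : ∀ t ∈ Set.Ioo a b, HasDerivAt V (f t (V t)) t := fun t ht =>
    (hV t (Set.Ioo_subset_Icc_self ht)).hasDerivAt (Icc_mem_nhds ht.1 ht.2)
  have hb := aux_bound h0 K.2 V _ hV' (fun t ht => by
    have htI := Set.Ioo_subset_Icc_self ht
    simp only [f, norm_neg, norm_smul, hT1 t htI, mul_one, Real.norm_eq_abs]
    refine (hφx _).trans ((abs_real_inner_le_norm _ _).trans ?_)
    rw [mul_comm]
    gcongr
    exact hKK t htI)
  refine ⟨V, hV0, fun t ht => ?_⟩
  have h := hV' t ht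
  have htI := Set.Ioo_subset_Icc_self ht
  have : φ ⟪V t, A t⟫_ℝ = ⟪V t, A t⟫_ℝ := by
    apply hφe
    refine (abs_real_inner_le_norm _ _).trans ?_
    rw [hM]
    have h1 := hb t ht
    have hV0' : V t₀ = v₀ := hV0
    rw [hV0'] at h1
    have h2 := hKK t htI
    exact mul_le_mul h1 h2 (norm_nonneg _) (by positivity)
  simpa only [f, this] using h

lemma aux_global [CompleteSpace E] (I : Set ℝ) (hI : IsOpen I) (hIc : Convex ℝ I) (T A : ℝ → E)
    (hT : ∀ t ∈ I, HasDerivAt T (A t) t) (hAc : ContinuousOn A I)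
    (hT1 : ∀ t ∈ I, ‖T t‖ = 1) {t₀ : ℝ} (h0 : t₀ ∈ I) (v₀ : E) (hv : ⟪v₀, T t₀⟫_ℝ = 0) :
    ∃ V : ℝ → E, V t₀ = v₀ ∧ ∀ t ∈ I, HasDerivAt V (-(⟪V t, A t⟫_ℝ • T t)) t := by
  have hTc : ContinuousOn T I := fun t ht => (hT t ht).continuousAt.continuousWithinAt
  have nb : ∀ s ∈ I, ∃ c ∈ I, ∃ d ∈ I, c < s ∧ s < d := by
    intro s hs
    obtain ⟨ε, hε, hb⟩ := Metric.isOpen_iff.1 hI s hs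
    refine ⟨s - ε / 2, hb ?_, s + ε / 2, hb ?_, by linarith, by linarith⟩ <;>
    · simp [abs_of_pos hε]; try linarith
  have ex : ∀ s : ℝ, ∃ a b : ℝ, ∃ W : ℝ → E, s ∈ I → (t₀ ∈ Set.Ioo a b ∧ s ∈ Set.Ioo a b ∧
      Set.Ioo a b ⊆ I ∧ W t₀ = v₀ ∧
      ∀ t ∈ Set.Ioo a b, HasDerivAt W (-(⟪W t, A t⟫_ℝ • T t)) t) := by
    intro s
    by_cases hs : s ∈ I
    · obtain ⟨c, hc, d, hd, h1, h2⟩ := nb s hs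
      obtain ⟨c', hc', d', hd', h1', h2'⟩ := nb t₀ h0
      have ha : min c c' ∈ I := by rcases min_choice c c' with h | h <;> rw [h] <;> assumption
      have hb : max d d' ∈ I := by rcases max_choice d d' with h | h <;> rw [h] <;> assumption
      have hsub : Set.Icc (min c c') (max d d') ⊆ I := hIc.ordConnected.out ha hb
      have m0 : t₀ ∈ Set.Ioo (min c c') (max d d') :=
        ⟨(min_le_right _ _).trans_lt h1', h2'.trans_le (le_max_right _ _)⟩
      obtain ⟨W, hW0, hW⟩ := aux_exists m0 T A (hTc.mono hsub) (hAc.mono hsub)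
        (fun t ht => hT1 t (hsub ht)) v₀
      exact ⟨_, _, W, fun _ => ⟨m0,
        ⟨(min_le_left _ _).trans_lt h1, h2.trans_le (le_max_left _ _)⟩,
        Set.Ioo_subset_Icc_self.trans hsub, hW0, hW⟩⟩
    · exact ⟨0, 0, 0, fun h => absurd h hs⟩
  choose a b W hW using ex
  have uniq : ∀ s ∈ I, ∀ r ∈ I, ∀ t ∈ Set.Ioo (a s) (b s) ∩ Set.Ioo (a r) (b r),
      W s t = W r t := by
    intro s hs r hr t ht
    obtain ⟨s1, s2, s3, s4, s5⟩ := hW s hs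
    obtain ⟨r1, r2, r3, r4, r5⟩ := hW r hr
    have := (aux_normal (Set.Ioo (a s) (b s) ∩ Set.Ioo (a r) (b r)) (isOpen_Ioo.inter isOpen_Ioo)
      ((convex_Ioo _ _).inter (convex_Ioo _ _)) T A (fun t => W s t - W r t)
      (fun t ht => hT t (s3 ht.1)) (fun t ht => hT1 t (s3 ht.1)) (fun t ht => by
        refine ((s5 t ht.1).sub (r5 t ht.2)).congr_deriv ?_
        rw [inner_sub_left, sub_smul]; abel) (t₀ := t₀) ⟨s1, r1⟩ (by simp [s4, r4])).2 t ht
    simp only [s4, r4, sub_self, norm_zero, norm_eq_zero] at this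
    exact sub_eq_zero.1 this
  refine ⟨fun s => W s s, (hW t₀ h0).2.2.2.1, fun s hs => ?_⟩
  obtain ⟨s1, s2, s3, s4, s5⟩ := hW s hs
  refine (s5 s s2).congr_of_eventuallyEq ?_
  filter_upwards [isOpen_Ioo.mem_nhds s2] with r hr
  exact uniq r (s3 hr) s hs r ⟨(hW r (s3 hr)).2.1, hr⟩

end helpers

lemma aux_unit {n : ℕ} (hn : 3 ≤ n) (x y : EuclideanSpace ℝ (Fin n)) :
    ∃ v : EuclideanSpace ℝ (Fin n), ‖v‖ = 1 ∧ ⟪v, x⟫_ℝ = 0 ∧ ⟪v, y⟫_ℝ = 0 := by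
  classical
  set S : Submodule ℝ (EuclideanSpace ℝ (Fin n)) := Submodule.span ℝ {x, y} with hS
  have h2 : Module.finrank ℝ S ≤ 2 := by
    have h := finrank_span_le_card (R := ℝ) ({x, y} : Set (EuclideanSpace ℝ (Fin n)))
    refine h.trans ?_
    rw [Set.toFinset_insert, Set.toFinset_singleton]
    exact Finset.card_le_two
  have h3 := S.finrank_add_finrank_orthogonal
  rw [finrank_euclideanSpace_fin] at h3
  have hne : Sᗮ ≠ ⊥ := by
    intro h
    rw [h, finrank_bot] at h3
    omega
  obtain ⟨w, hw, hw0⟩ := Submodule.exists_mem_ne_zero_of_ne_bot hne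
  have hx : ⟪w, x⟫_ℝ = 0 :=
    (Submodule.mem_orthogonal' _ _).1 hw x (Submodule.subset_span (by simp))
  have hy : ⟪w, y⟫_ℝ = 0 :=
    (Submodule.mem_orthogonal' _ _).1 hw y (Submodule.subset_span (by simp))
  refine ⟨‖w‖⁻¹ • w, ?_, ?_, ?_⟩
  · rw [norm_smul, norm_inv, norm_norm, inv_mul_cancel₀ (norm_ne_zero_iff.2 hw0)]
  · rw [real_inner_smul_left, hx, mul_zero]
  · rw [real_inner_smul_left, hy, mul_zero]

/-- Every C² unit-speed curve `α : I → ℝⁿ` (`n ≥ 3`) lying in a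
hyperplane or on a sphere is normal with respect to some rotation minimizing normal
field: there exist a point `p` and a C¹ unit vector field `V` along `α` with
`⟪V, α'⟫ = 0`, `V'` everywhere a scalar multiple of `α'`, and `⟪α - p, V⟫ ≡ 0`. -/
theorem plane_or_sphere_curve_is_normal_wrt_RM_field
    {n : ℕ} (hn : 3 ≤ n)
    (I : Set ℝ) (hIopen : IsOpen I) (hIne : I.Nonempty) (hIconv : Convex ℝ I)
    (α : ℝ → EuclideanSpace ℝ (Fin n))
    (hC2 : ContDiffOn ℝ 2 α I)
    (hunit : ∀ s ∈ I, ‖deriv α s‖ = 1)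
    (hps : (∃ d : EuclideanSpace ℝ (Fin n), d ≠ 0 ∧ ∃ c : ℝ, ∀ s ∈ I, ⟪α s, d⟫_ℝ = c) ∨
      (∃ q : EuclideanSpace ℝ (Fin n), ∃ R : ℝ, 0 < R ∧ ∀ s ∈ I, ‖α s - q‖ = R)) :
    ∃ p : EuclideanSpace ℝ (Fin n), ∃ V : ℝ → EuclideanSpace ℝ (Fin n),
      ContDiffOn ℝ 1 V I ∧
      (∀ s ∈ I, ‖V s‖ = 1) ∧
      (∀ s ∈ I, ⟪V s, deriv α s⟫_ℝ = 0) ∧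
      (∀ s ∈ I, ∃ lam : ℝ, deriv V s = lam • deriv α s) ∧
      (∀ s ∈ I, ⟪α s - p, V s⟫_ℝ = 0) := by
  obtain ⟨t₀, h0⟩ := hIne
  have hα : ∀ s ∈ I, HasDerivAt α (deriv α s) s := fun s hs =>
    ((hC2.differentiableOn (by norm_num)).differentiableAt (hIopen.mem_nhds hs)).hasDerivAt
  rcases hps with ⟨d, hd, c, hc⟩ | ⟨q, R, hR, hq⟩
  · have hda : ∀ s ∈ I, ⟪d, deriv α s⟫_ℝ = 0 := by
      intro s hs
      have h1 : HasDerivAt (fun t => ⟪α t, d⟫_ℝ) ⟪deriv α s, d⟫_ℝ s := by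
        simpa using (hα s hs).inner ℝ (hasDerivAt_const s d)
      have h2 : HasDerivAt (fun t => ⟪α t, d⟫_ℝ) 0 s := by
        refine (hasDerivAt_const s c).congr_of_eventuallyEq ?_
        filter_upwards [hIopen.mem_nhds hs] with t ht using hc t ht
      rw [real_inner_comm]
      exact h1.unique h2
    refine ⟨α t₀, fun _ => ‖d‖⁻¹ • d, contDiffOn_const, fun s _ => ?_, fun s hs => ?_,
      fun s _ => ⟨0, by simp⟩, fun s hs => ?_⟩
    · rw [norm_smul, norm_inv, norm_norm, inv_mul_cancel₀ (norm_ne_zero_iff.2 hd)]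
    · rw [real_inner_smul_left, hda s hs, mul_zero]
    · rw [real_inner_smul_right, inner_sub_left, hc s hs, hc t₀ h0, sub_self, mul_zero]
  · have hqa : ∀ s ∈ I, ⟪α s - q, deriv α s⟫_ℝ = 0 := by
      intro s hs
      have h1 := ((hα s hs).sub_const q).inner ℝ ((hα s hs).sub_const q)
      have h2 : HasDerivAt (fun t => ⟪α t - q, α t - q⟫_ℝ) 0 s := by
        refine (hasDerivAt_const s (R ^ 2)).congr_of_eventuallyEq ?_
        filter_upwards [hIopen.mem_nhds hs] with t ht
        rw [real_inner_self_eq_norm_sq, hq t ht]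
      have h3 := h1.unique h2
      rw [real_inner_comm (α s - q) (deriv α s)] at h3
      linarith
    have hT1 : ContDiffOn ℝ 1 (deriv α) I :=
      ((contDiffOn_succ_iff_deriv_of_isOpen (n := 1) hIopen).1 (by simpa [one_add_one_eq_two] using hC2)).2.2
    have hAc : ContinuousOn (deriv (deriv α)) I :=
      hT1.continuousOn_deriv_of_isOpen hIopen le_rfl
    have hT : ∀ s ∈ I, HasDerivAt (deriv α) (deriv (deriv α) s) s := fun s hs =>
      ((hT1.differentiableOn (by norm_num)).differentiableAt (hIopen.mem_nhds hs)).hasDerivAt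
    obtain ⟨v₀, hv1, hvT, hvq⟩ := aux_unit hn (deriv α t₀) (α t₀ - q)
    obtain ⟨V, hV0, hV⟩ := aux_global I hIopen hIconv _ _ hT hAc hunit h0 v₀ hvT
    obtain ⟨hn1, hn2⟩ := aux_normal I hIopen hIconv _ _ V hT hunit hV h0 (by rw [hV0, hvT])
    have hVc : ContinuousOn V I := fun t ht => (hV t ht).continuousAt.continuousWithinAt
    refine ⟨q, V, ?_, fun s hs => by rw [hn2 s hs, hV0, hv1], hn1,
      fun s hs => ⟨-⟪V s, deriv (deriv α) s⟫_ℝ, by rw [(hV s hs).deriv, neg_smul]⟩, ?_⟩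
    · refine (contDiffOn_succ_iff_deriv_of_isOpen (n := 0) hIopen).2
        ⟨fun s hs => (hV s hs).differentiableAt.differentiableWithinAt, by simp, ?_⟩
      rw [contDiffOn_zero]
      refine ContinuousOn.congr ?_ (fun s hs => (hV s hs).deriv)
      exact ((ContinuousOn.inner (𝕜 := ℝ) hVc hAc).smul hT1.continuousOn).neg
    · intro s hs
      have : ⟪α s - q, V s⟫_ℝ = ⟪α t₀ - q, V t₀⟫_ℝ := by
        refine aux_const I hIopen hIconv (fun s => ⟪α s - q, V s⟫_ℝ) (fun t ht => ?_) hs h0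
        refine (((hα t ht).sub_const q).inner ℝ (hV t ht)).congr_deriv ?_
        rw [inner_neg_right, real_inner_smul_right, hqa t ht, real_inner_comm (V t) (deriv α t), hn1 t ht]
        simp
      rw [this, hV0, real_inner_comm, hvq]
end
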